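/- Let q be a prime power and let ν, m₁, m₂, t be positive integers with m₁ ≥ m₂ ≥ t+1 and 2ν ≥ 2m₁ + m₂ + t + 3, and suppose moreover that m₂ ≤ 2t and (m₁,m₂,t) ∉ {(2,2,1), (3,2,1)}. Suppose ℱ₁ ⊆ 𝒫_{m₁} and ℱ₂ ⊆ 𝒫_{m₂} are non-trivial cross t-intersecting families such that |ℱ₁|·|ℱ₂| ≥ |𝒢₁|·|𝒢₂| for every pair of non-trivial cross t-intersecting families 𝒢₁ ⊆ 𝒫_{m₁}, 𝒢₂ ⊆ 𝒫_{m₂}. Then there exists S ∈ 𝒫_{t+1} such that either (i) ℱ₁ = 𝒞₃(S;m₁) and ℱ₂ = 𝒞₄(S;m₂,t), or (ii) m₁ = m₂ and ℱ₁ = 𝒞₄(S;m₁,t) and ℱ₂ = 𝒞₃(S;m₂). -/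

import Mathlib

open Finset Module

noncomputable section

/-- Gaussian binomial coefficient `[n choose k]_q` as a rational number. -/
def gaussBinom (q n k : ℕ) : ℚ :=
  ∏ i ∈ Finset.range k, ((q : ℚ) ^ ((n : ℤ) - i) - 1) / ((q : ℚ) ^ ((k : ℤ) - i) - 1)

/-- `N'(a; m; 2ν)`, the number of `m`-dim totally isotropic subspaces containing
a fixed `a`-dim one. -/
def Nprime (q a m ν : ℕ) : ℚ :=
  ∏ i ∈ Finset.Icc 1 (m - a), ((q : ℚ) ^ (2 * ((ν : ℤ) - m + i)) - 1) / ((q : ℚ) ^ (i : ℤ) - 1)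

variable {K V : Type*} [Field K] [AddCommGroup V] [Module K V]

/-- A subspace is totally isotropic w.r.t. the bilinear form `f`. -/
def TotallyIsotropic (f : V →ₗ[K] V →ₗ[K] K) (W : Submodule K V) : Prop :=
  ∀ x ∈ W, ∀ y ∈ W, f x y = 0

/-- `polar f m` = `𝒫_m`, the set of `m`-dimensional totally isotropic subspaces. -/
def polar (f : V →ₗ[K] V →ₗ[K] K) (m : ℕ) : Set (Submodule K V) :=
  {W | TotallyIsotropic f W ∧ finrank K W = m}

/-- `X` is a `t`-cover of the family `ℱ`. -/
def IsTCover (f : V →ₗ[K] V →ₗ[K] K) (t : ℕ) (ℱ : Set (Submodule K V))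
    (X : Submodule K V) : Prop :=
  TotallyIsotropic f X ∧ ∀ F ∈ ℱ, t ≤ finrank K ↥(X ⊓ F)

/-- `τ_t(ℱ)`, the minimum dimension of a `t`-cover of `ℱ`. -/
def tauCover (f : V →ₗ[K] V →ₗ[K] K) (t : ℕ) (ℱ : Set (Submodule K V)) : ℕ :=
  sInf {x | ∃ X, IsTCover f t ℱ X ∧ finrank K ↥X = x}

def C1 (f : V →ₗ[K] V →ₗ[K] K) (M T : Submodule K V) (m t : ℕ) : Set (Submodule K V) :=
  {F | F ∈ polar f m ∧ T ≤ F ∧ t + 1 ≤ finrank K ↥(F ⊓ M)}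

def C2 (f : V →ₗ[K] V →ₗ[K] K) (M T : Submodule K V) (m : ℕ) : Set (Submodule K V) :=
  {F | F ∈ polar f m ∧ T ≤ F} ∪ {F | F ∈ polar f m ∧ F ≤ M}

def C3 (f : V →ₗ[K] V →ₗ[K] K) (S : Submodule K V) (m : ℕ) : Set (Submodule K V) :=
  {F | F ∈ polar f m ∧ S ≤ F}

def C4 (f : V →ₗ[K] V →ₗ[K] K) (S : Submodule K V) (m t : ℕ) : Set (Submodule K V) :=
  {F | F ∈ polar f m ∧ t ≤ finrank K ↥(F ⊓ S)}

def s0 (q ν m s t : ℕ) : ℚ :=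
  gaussBinom q (s - t) 1 * Nprime q (t + 1) m ν - q * gaussBinom q (s - t) 2 * Nprime q (t + 2) m ν

/-
If the smallest `t`-covers of `X` and `Y` have dimensions `t + i` and `t + j`, extending subspaces
dimension by dimension inside members of the other family bounds `|Y|` by a multiple of
`Nprime q (t + i) mY ν` and `|X|` by a multiple of `Nprime q (t + j) mX ν`. The ratio
`isoRatio q ν m a` of consecutive values of `Nprime` is at least `q ^ (2ν - m - a)`, so the
hypothesis on `ν` makes the product too small unless one of the families, say `Y`, has a common
`t`-dimensional subspace `T` and `i ≤ 1`. Some `G ∈ X` does not contain `T`, so every `F ∈ Y`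
contains one of at most `[mX - t + 1]` extensions of `T` by one dimension. For `min mY mX < 2t` or
`mX ≠ 2t` this bound already loses a factor `1 - gap q t`, which absorbs all error terms. In the
remaining case `mX = 2t ≤ mY` the leading terms agree, and the members of `Y` have to be counted
more precisely. The only survivors are the pairs for which a `(t + 1)`-dimensional `t`-cover `S`
of `X` lies in every member of `Y`, i.e. `Y ⊆ C3 f S mY` and `X ⊆ C4 f S mX t`.
-/

/-! ### `q`-numbers -/

/-- The `q`-number `[n]_q = 1 + q + ⋯ + q ^ (n - 1)`, the number of points of a projective space
of vector dimension `n` over the field with `q` elements. -/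
def qNumber (q n : ℕ) : ℚ :=
  ∑ i ∈ range n, (q : ℚ) ^ i

section qNumber

variable {q : ℕ}

lemma qNumber_one (q : ℕ) : qNumber q 1 = 1 := by
  simp [qNumber]

lemma qNumber_succ (q n : ℕ) : qNumber q (n + 1) = q * qNumber q n + 1 :=
  geom_sum_succ

lemma qNumber_mul_sub_one (q n : ℕ) : qNumber q n * (q - 1) = (q : ℚ) ^ n - 1 :=
  geom_sum_mul _ _

lemma qNumber_add (q m n : ℕ) : qNumber q (m + n) = qNumber q m + (q : ℚ) ^ m * qNumber q n := by
  simp only [qNumber, sum_range_add, mul_sum, pow_add]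

lemma qNumber_nonneg (q n : ℕ) : 0 ≤ qNumber q n :=
  sum_nonneg fun _ _ ↦ by positivity

lemma one_le_qNumber_succ (q n : ℕ) : 1 ≤ qNumber q (n + 1) := by
  rw [qNumber_succ]
  linarith [mul_nonneg (Nat.cast_nonneg (α := ℚ) q) (qNumber_nonneg q n)]

lemma one_le_qNumber {n : ℕ} (hn : 0 < n) : 1 ≤ qNumber q n := by
  obtain ⟨k, rfl⟩ := Nat.exists_eq_add_of_lt hn
  simpa only [zero_add] using one_le_qNumber_succ q k

lemma qNumber_pos {n : ℕ} (hn : 0 < n) : 0 < qNumber q n :=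
  one_pos.trans_le (one_le_qNumber hn)

lemma qNumber_mono (q : ℕ) : Monotone (qNumber q) := fun _ _ h ↦
  sum_le_sum_of_subset_of_nonneg (range_mono h) fun _ _ _ ↦ by positivity

lemma pow_le_qNumber_succ (q n : ℕ) : (q : ℚ) ^ n ≤ qNumber q (n + 1) := by
  rw [qNumber_add, qNumber_one, mul_one]
  exact le_add_of_nonneg_left (qNumber_nonneg q n)

lemma pow_mul_qNumber_le (q m n : ℕ) : (q : ℚ) ^ m * qNumber q n ≤ qNumber q (m + n) := by
  rw [qNumber_add]
  exact le_add_of_nonneg_left (qNumber_nonneg q m)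

lemma qNumber_strictMono (hq : 2 ≤ q) : StrictMono (qNumber q) :=
  strictMono_nat_of_lt_succ fun n ↦ by
    rw [qNumber_add, qNumber_one, mul_one]
    exact lt_add_of_pos_right _ (by positivity)

lemma qNumber_succ_le (hq : 2 ≤ q) (n : ℕ) : qNumber q (n + 1) ≤ 2 * (q : ℚ) ^ n := by
  have hq' : (2 : ℚ) ≤ q := by exact_mod_cast hq
  induction n with
  | zero => norm_num [qNumber_one]
  | succ n ih =>
    rw [qNumber_add, qNumber_one, pow_succ]
    have : (q : ℚ) ^ n * 2 ≤ (q : ℚ) ^ n * q := by gcongr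
    linarith

lemma qNumber_succ_le_mul {n : ℕ} (hn : 0 < n) : qNumber q (n + 1) ≤ (q + 1) * qNumber q n := by
  rw [qNumber_succ]
  linarith [one_le_qNumber (q := q) hn]

end qNumber

/-! ### The numbers `N'(a; m; 2ν)` -/

/-- The quotient `N'(a; m; 2ν) / N'(a + 1; m; 2ν)` of consecutive numbers of totally isotropic
`m`-spaces through a fixed subspace. Both subtractions are meant for `a ≤ ν` and `a < m`. -/
def isoRatio (q ν m a : ℕ) : ℚ :=
  qNumber q (2 * (ν - a)) / qNumber q (m - a)

section Nprime

variable {q ν m m' a : ℕ}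

lemma Nprime_self (q m ν : ℕ) : Nprime q m m ν = 1 := by
  simp [Nprime]

lemma Nprime_eq_isoRatio_mul (hq : 2 ≤ q) (ham : a < m) (haν : a ≤ ν) :
    Nprime q a m ν = isoRatio q ν m a * Nprime q (a + 1) m ν := by
  have hq' : (q : ℚ) - 1 ≠ 0 := sub_ne_zero.2 (by exact_mod_cast (by omega : q ≠ 1))
  have hlast : 2 * ((ν : ℤ) - m + ↑(m - (a + 1) + 1)) = ↑(2 * (ν - a)) := by omega
  rw [Nprime, show m - a = m - (a + 1) + 1 by omega, prod_Icc_succ_top (by omega), hlast,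
    zpow_natCast, zpow_natCast, ← qNumber_mul_sub_one, ← qNumber_mul_sub_one,
    mul_div_mul_right _ _ hq', mul_comm, isoRatio, Nprime, show m - a = m - (a + 1) + 1 by omega]

lemma pow_le_isoRatio {e : ℕ} (ham : a < m) (he : e + m + a ≤ 2 * ν) :
    (q : ℚ) ^ e ≤ isoRatio q ν m a := by
  rw [isoRatio, le_div_iff₀ (qNumber_pos (by omega))]
  exact (pow_mul_qNumber_le q e (m - a)).trans (qNumber_mono q (by omega))

lemma one_le_isoRatio (ham : a < m) (hmν : m ≤ ν) : 1 ≤ isoRatio q ν m a := by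
  simpa only [pow_zero] using pow_le_isoRatio (q := q) (e := 0) ham (by omega)

lemma isoRatio_nonneg (q ν m a : ℕ) : 0 ≤ isoRatio q ν m a :=
  div_nonneg (qNumber_nonneg _ _) (qNumber_nonneg _ _)

lemma isoRatio_anti (ham : a < m) (hmm : m ≤ m') : isoRatio q ν m' a ≤ isoRatio q ν m a :=
  div_le_div_of_nonneg_left (qNumber_nonneg _ _) (qNumber_pos (by omega))
    (qNumber_mono q (by omega))

lemma isoRatio_strictAnti (hq : 2 ≤ q) (ham : a < m) (hmm : m < m') (haν : a < ν) :
    isoRatio q ν m' a < isoRatio q ν m a :=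
  div_lt_div_of_pos_left (qNumber_pos (by omega)) (qNumber_pos (by omega))
    (qNumber_strictMono hq (by omega))

lemma one_le_Nprime (hq : 2 ≤ q) (hmν : m ≤ ν) : 1 ≤ Nprime q a m ν := by
  induction h : m - a generalizing a with
  | zero => simp [Nprime, h]
  | succ k ih =>
    rw [Nprime_eq_isoRatio_mul hq (by omega) (by omega)]
    exact one_le_mul_of_one_le_of_one_le (one_le_isoRatio (by omega) hmν) (ih (by omega))

lemma Nprime_pos (hq : 2 ≤ q) (hmν : m ≤ ν) : 0 < Nprime q a m ν :=
  one_pos.trans_le (one_le_Nprime hq hmν)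

end Nprime

/-! ### Dimensions of subspaces -/

section Dimension

variable [FiniteDimensional K V]

lemma exists_le_le_finrank_eq {A B : Submodule K V} (hAB : A ≤ B) {n : ℕ} (hA : finrank K A ≤ n)
    (hB : n ≤ finrank K B) : ∃ U, A ≤ U ∧ U ≤ B ∧ finrank K U = n := by
  induction n, hA using Nat.le_induction with
  | base => exact ⟨A, le_rfl, hAB, rfl⟩
  | succ n _ ih =>
    obtain ⟨U, hAU, hUB, hU⟩ := ih (by omega)
    obtain ⟨z, hzB, hzU⟩ : ∃ z ∈ B, z ∉ U :=
      SetLike.not_le_iff_exists.1 fun hBU ↦ by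
        have := Submodule.finrank_mono hBU
        omega
    refine ⟨U ⊔ K ∙ z, hAU.trans le_sup_left, ?_,
      by rw [Submodule.finrank_sup_span_singleton hzU, hU]⟩
    exact sup_le hUB ((Submodule.span_singleton_le_iff_mem z B).2 hzB)

lemma finrank_inf_add_finrank_le {U G : Submodule K V} (hUG : U ≤ G) (F : Submodule K V) :
    finrank K ↥(F ⊓ G) + finrank K U ≤ finrank K ↥(F ⊓ U) + finrank K G := by
  have hsup := Submodule.finrank_sup_add_finrank_inf_eq (F ⊓ G) U
  have hle := Submodule.finrank_mono (sup_le inf_le_right hUG : F ⊓ G ⊔ U ≤ G)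
  rw [inf_assoc, inf_eq_right.2 hUG] at hsup
  omega

lemma finrank_inf_lt_of_not_le {T G : Submodule K V} (h : ¬T ≤ G) :
    finrank K ↥(T ⊓ G) < finrank K T :=
  Submodule.finrank_lt_finrank_of_lt (inf_lt_left.2 h)

lemma sup_eq_of_finrank_eq_add_one {A B S : Submodule K V} (hA : A ≤ S) (hB : B ≤ S)
    (hne : A ≠ B) (hAB : finrank K A = finrank K B) (hS : finrank K S = finrank K A + 1) :
    A ⊔ B = S := by
  have hlt : A < A ⊔ B := left_lt_sup.2 fun hBA ↦
    hne (Submodule.eq_of_le_of_finrank_eq hBA hAB.symm).symm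
  have := Submodule.finrank_lt_finrank_of_lt hlt
  exact Submodule.eq_of_le_of_finrank_le (sup_le hA hB) (by omega)

lemma finrank_sup_eq_add_two {T A B : Submodule K V} (hTA : T ≤ A) (hTB : T ≤ B) (hne : A ≠ B)
    (hA : finrank K A = finrank K T + 1) (hB : finrank K B = finrank K T + 1) :
    finrank K ↥(A ⊔ B) = finrank K T + 2 := by
  have hlt : finrank K ↥(A ⊓ B) < finrank K A := finrank_inf_lt_of_not_le fun hAB ↦
    hne (Submodule.eq_of_le_of_finrank_eq hAB (hA.trans hB.symm))
  have := Submodule.finrank_sup_add_finrank_inf_eq A B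
  have := Submodule.finrank_mono (le_inf hTA hTB)
  omega

/-- A subspace through `T` which meets `G` in dimension at least `t` must leave `T` inside `W`:
its trace on `G` is too large to avoid a subspace of `G` of codimension `t - 1 - dim (T ⊓ G)`
over `T ⊓ G`. -/
lemma exists_enlargement {T G : Submodule K V} {t : ℕ} (hTG : finrank K ↥(T ⊓ G) < t)
    (htG : t ≤ finrank K G) :
    ∃ W, T ≤ W ∧ W ≤ T ⊔ G ∧ finrank K W = finrank K T + (finrank K G - t + 1) ∧
      ∀ F, T ≤ F → t ≤ finrank K ↥(F ⊓ G) → finrank K T + 1 ≤ finrank K ↥(F ⊓ W) := by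
  obtain ⟨U, hTU, hUG, hU⟩ := exists_le_le_finrank_eq (inf_le_right : T ⊓ G ≤ G)
    (n := finrank K ↥(T ⊓ G) + (finrank K G - t + 1)) (by omega) (by omega)
  have hinf : T ⊓ U = T ⊓ G := le_antisymm (inf_le_inf_left _ hUG) (le_inf inf_le_left hTU)
  refine ⟨T ⊔ U, le_sup_left, sup_le_sup_left hUG T, ?_, fun F hTF htF ↦ ?_⟩
  · have := Submodule.finrank_sup_add_finrank_inf_eq T U
    rw [hinf] at this
    omega
  · have hFU := finrank_inf_add_finrank_le hUG F
    have hsup := Submodule.finrank_sup_add_finrank_inf_eq T (F ⊓ U)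
    rw [← inf_assoc, inf_eq_left.2 hTF, hinf] at hsup
    have := Submodule.finrank_mono (le_inf (sup_le hTF inf_le_left)
      (sup_le_sup_left inf_le_right T) : T ⊔ F ⊓ U ≤ F ⊓ (T ⊔ U))
    omega

end Dimension

/-! ### Counting subspaces -/

section Counting

lemma two_le_natCard (K : Type*) [Field K] [Finite K] : 2 ≤ Nat.card K :=
  Finite.one_lt_card

lemma natCard_lines [Finite K] {n : ℕ} (h : finrank K V = n) :
    (Nat.card {L : Submodule K V // finrank K L = 1} : ℚ) = qNumber (Nat.card K) n := by
  rw [← Nat.card_congr (Projectivization.equivSubmodule K V),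
    Projectivization.card_of_finrank K V h, qNumber]
  push_cast
  rfl

lemma natCard_hyperplanes [Finite K] [FiniteDimensional K V] {n : ℕ} (h : finrank K V = n + 1) :
    (Nat.card {H : Submodule K V // finrank K H = n} : ℚ) = qNumber (Nat.card K) (n + 1) := by
  rw [← natCard_lines (K := K) (V := Dual K V) (Subspace.dual_finrank_eq.trans h)]
  congr 1
  refine Nat.card_congr (((Subspace.orderIsoFiniteDimensional (K := K) (V := V)).toEquiv.trans
    OrderDual.ofDual).subtypeEquiv fun H ↦ ?_)
  have hH := Subspace.finrank_add_finrank_dualAnnihilator_eq H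
  change finrank K H = n ↔ finrank K H.dualAnnihilator = 1
  omega

variable [Finite V]

/-- The finite set of `n`-dimensional subspaces `S` with `T ≤ S ≤ W`. -/
def between (T W : Submodule K V) (n : ℕ) : Finset (Submodule K V) :=
  (Set.toFinite {S | T ≤ S ∧ S ≤ W ∧ finrank K S = n}).toFinset

lemma mem_between {T W S : Submodule K V} {n : ℕ} :
    S ∈ between T W n ↔ T ≤ S ∧ S ≤ W ∧ finrank K S = n := by
  simp [between]

lemma card_between_bot (S : Submodule K V) (n : ℕ) :
    #(between ⊥ S n) = Nat.card {H : Submodule K S // finrank K H = n} := by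
  let e := (Submodule.MapSubtype.orderIso S).toEquiv.subtypeEquiv
    (p := fun H : Submodule K S ↦ finrank K H = n) (q := fun H ↦ finrank K H.1 = n)
    fun H ↦ by rw [← Submodule.finrank_map_subtype_eq]; rfl
  rw [← Nat.card_eq_finsetCard]
  refine (Nat.card_congr ((e.trans (Equiv.subtypeSubtypeEquivSubtypeInter (· ≤ S)
    fun H : Submodule K V ↦ finrank K H = n)).trans (Equiv.subtypeEquivRight fun H ↦ ?_))).symm
  simp [mem_between]

variable [Finite K]

lemma card_between_bot_hyperplanes {S : Submodule K V} {n : ℕ} (hS : finrank K S = n + 1) :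
    (#(between ⊥ S n) : ℚ) = qNumber (Nat.card K) (n + 1) := by
  rw [card_between_bot, natCard_hyperplanes hS]

/-- Intersecting with a complement of `T` in `W` turns the extensions of `T` into lines. -/
lemma card_between_succ {T W : Submodule K V} (hTW : T ≤ W) {n : ℕ}
    (hW : finrank K W = finrank K T + n) :
    (#(between T W (finrank K T + 1)) : ℚ) = qNumber (Nat.card K) n := by
  obtain ⟨C, hdisj, hsup⟩ := IsModularLattice.exists_disjoint_and_sup_eq hTW
  have hfinrank {L : Submodule K V} (hL : L ≤ C) :
      finrank K ↥(T ⊔ L) = finrank K T + finrank K L := by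
    have := Submodule.finrank_sup_add_finrank_inf_eq T L
    rwa [(hdisj.mono_right hL).eq_bot, finrank_bot, add_zero] at this
  have hC : finrank K C = n := by
    have := hfinrank le_rfl
    rw [hsup] at this
    omega
  have hrec {S : Submodule K V} (hTS : T ≤ S) (hSW : S ≤ W) : T ⊔ S ⊓ C = S := by
    rw [inf_comm, ← sup_inf_assoc_of_le C hTS, hsup, inf_eq_right.2 hSW]
  rw [← natCard_lines hC, ← card_between_bot]
  congr 1
  refine card_bij' (fun S _ ↦ S ⊓ C) (fun L _ ↦ T ⊔ L) ?_ ?_ ?_ ?_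
  · intro S hS
    obtain ⟨hTS, hSW, hS⟩ := mem_between.1 hS
    have := hfinrank (inf_le_right : S ⊓ C ≤ C)
    rw [hrec hTS hSW] at this
    exact mem_between.2 ⟨bot_le, inf_le_right, by omega⟩
  · intro L hL
    obtain ⟨-, hLC, hL⟩ := mem_between.1 hL
    exact mem_between.2 ⟨le_sup_left, hsup ▸ sup_le_sup_left hLC T, by rw [hfinrank hLC, hL]⟩
  · intro S hS
    exact hrec (mem_between.1 hS).1 (mem_between.1 hS).2.1
  · intro L hL
    have hLC := (mem_between.1 hL).2.1
    change (T ⊔ L) ⊓ C = L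
    rw [sup_comm, sup_inf_assoc_of_le T hLC, hdisj.eq_bot, sup_bot_eq]

end Counting

/-! ### Totally isotropic subspaces -/

section Isotropic

variable {f : V →ₗ[K] V →ₗ[K] K} {A S T : Submodule K V}

lemma totallyIsotropic_bot (f : V →ₗ[K] V →ₗ[K] K) : TotallyIsotropic f ⊥ := by
  intro x hx y _
  rw [(Submodule.mem_bot K).1 hx, map_zero, LinearMap.zero_apply]

lemma TotallyIsotropic.mono (hS : TotallyIsotropic f S) (hTS : T ≤ S) : TotallyIsotropic f T :=
  fun x hx y hy ↦ hS x (hTS hx) y (hTS hy)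

lemma TotallyIsotropic.le_orthogonal (hS : TotallyIsotropic f S) (hTS : T ≤ S) :
    S ≤ LinearMap.BilinForm.orthogonal f T :=
  fun y hy x hx ↦ hS x (hTS hx) y hy

lemma totallyIsotropic_span_singleton (hf : f.IsAlt) (z : V) : TotallyIsotropic f (K ∙ z) := by
  intro x hx y hy
  obtain ⟨a, rfl⟩ := Submodule.mem_span_singleton.1 hx
  obtain ⟨b, rfl⟩ := Submodule.mem_span_singleton.1 hy
  simp [hf.self_eq_zero]

lemma TotallyIsotropic.sup (hf : f.IsAlt) (hT : TotallyIsotropic f T) (hS : TotallyIsotropic f S)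
    (hST : S ≤ LinearMap.BilinForm.orthogonal f T) : TotallyIsotropic f (T ⊔ S) := by
  have hTS : ∀ a ∈ T, ∀ b ∈ S, f a b = 0 := fun a ha b hb ↦ hST hb a ha
  have hST' : ∀ b ∈ S, ∀ a ∈ T, f b a = 0 := fun b hb a ha ↦ by
    rw [← hf.neg, hTS a ha b hb, neg_zero]
  intro x hx y hy
  obtain ⟨a, ha, b, hb, rfl⟩ := Submodule.mem_sup.1 hx
  obtain ⟨a', ha', b', hb', rfl⟩ := Submodule.mem_sup.1 hy
  simp [hT a ha a' ha', hTS a ha b' hb', hST' b hb a' ha', hS b hb b' hb']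

lemma TotallyIsotropic.of_le_orthogonal [FiniteDimensional K V] (hf : f.IsAlt)
    (hT : TotallyIsotropic f T) (hTS : T ≤ S) (hS : S ≤ LinearMap.BilinForm.orthogonal f T)
    (hdim : finrank K S = finrank K T + 1) : TotallyIsotropic f S := by
  obtain ⟨z, hzS, hzT⟩ : ∃ z ∈ S, z ∉ T := SetLike.not_le_iff_exists.1 fun hST ↦ by
    have := Submodule.finrank_mono hST
    omega
  have hzS' : K ∙ z ≤ S := (Submodule.span_singleton_le_iff_mem z S).2 hzS
  have hsup : T ⊔ K ∙ z = S := Submodule.eq_of_le_of_finrank_eq (sup_le hTS hzS')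
    (by rw [Submodule.finrank_sup_span_singleton hzT, hdim])
  exact hsup ▸ hT.sup hf (totallyIsotropic_span_singleton hf z) (hzS'.trans hS)

end Isotropic

/-- `f` is a nondegenerate alternating form on a space of dimension `2ν`. -/
structure IsSymplectic (f : V →ₗ[K] V →ₗ[K] K) (ν : ℕ) : Prop where
  isAlt : f.IsAlt
  separatingLeft : f.SeparatingLeft
  finrank_eq : finrank K V = 2 * ν

namespace IsSymplectic

variable {f : V →ₗ[K] V →ₗ[K] K} {ν : ℕ}

lemma nondegenerate (hf : IsSymplectic f ν) : f.Nondegenerate :=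
  hf.isAlt.isRefl.nondegenerate_iff_separatingLeft.2 hf.separatingLeft

lemma finrank_orthogonal [FiniteDimensional K V] (hf : IsSymplectic f ν) (A : Submodule K V) :
    finrank K (LinearMap.BilinForm.orthogonal f A) = 2 * ν - finrank K A := by
  rw [LinearMap.BilinForm.finrank_orthogonal hf.nondegenerate, hf.finrank_eq]

lemma finrank_le [FiniteDimensional K V] (hf : IsSymplectic f ν) {A : Submodule K V}
    (hA : TotallyIsotropic f A) : finrank K A ≤ ν := by
  have := Submodule.finrank_mono (hA.le_orthogonal le_rfl)
  rw [hf.finrank_orthogonal] at this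
  omega

end IsSymplectic

/-- The members of the family `Y` that contain `S`. -/
def above (Y : Set (Submodule K V)) (S : Submodule K V) : Set (Submodule K V) :=
  {F ∈ Y | S ≤ F}

lemma above_bot (Y : Set (Submodule K V)) : above Y ⊥ = Y := by
  simp [above]

section Counting

variable [Finite V] {f : V →ₗ[K] V →ₗ[K] K} {ν m t : ℕ} {A S : Submodule K V}

open Classical in
lemma sum_ncard_above {Y : Set (Submodule K V)} {s : Finset (Submodule K V)} {c : ℚ}
    (h : ∀ F ∈ Y, (#{S ∈ s | S ≤ F} : ℚ) = c) :
    ∑ S ∈ s, ((above Y S).ncard : ℚ) = Y.ncard * c := by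
  set Y' := (Set.toFinite Y).toFinset
  have habove (S : Submodule K V) : ((above Y S).ncard : ℚ) = #{F ∈ Y' | S ≤ F} := by
    rw [Set.ncard_eq_toFinset_card _ (Set.toFinite _)]
    congr 2
    ext F
    simp [above, Y']
  have hdouble := sum_card_bipartiteAbove_eq_sum_card_bipartiteBelow (s := s) (t := Y') (· ≤ ·)
  calc ∑ S ∈ s, ((above Y S).ncard : ℚ) = ∑ F ∈ Y', (#{S ∈ s | S ≤ F} : ℚ) := by
        simp_rw [habove]
        exact_mod_cast hdouble
    _ = #Y' * c := by
        rw [sum_congr rfl fun F hF ↦ h F ((Set.Finite.mem_toFinset _).1 hF), sum_const,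
          nsmul_eq_mul]
    _ = Y.ncard * c := by rw [Set.ncard_eq_toFinset_card Y (Set.toFinite Y)]

lemma C3_eq_singleton (hA : A ∈ polar f m) : C3 f A m = {A} := by
  ext F
  refine ⟨fun ⟨hF, hAF⟩ ↦ (Submodule.eq_of_le_of_finrank_eq hAF (hA.2.trans hF.2.symm)).symm, ?_⟩
  rintro rfl
  exact ⟨hA, le_rfl⟩

open Classical in
lemma card_filter_le_of_mem_C4_sdiff_C3 {F : Submodule K V} (hS : finrank K S = t + 1)
    (hF : F ∈ C4 f S m t \ C3 f S m) : #{H ∈ between ⊥ S t | H ≤ F} = 1 := by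
  obtain ⟨⟨hFm, htF⟩, hSF⟩ := hF
  have hlt : finrank K ↥(F ⊓ S) < t + 1 :=
    hS ▸ inf_comm S F ▸ finrank_inf_lt_of_not_le fun h ↦ hSF ⟨hFm, h⟩
  refine card_eq_one.2 ⟨F ⊓ S, ?_⟩
  ext H
  simp only [mem_filter, mem_between, mem_singleton, bot_le, true_and]
  refine ⟨fun h ↦ Submodule.eq_of_le_of_finrank_le (le_inf h.2 h.1.1) (by omega), ?_⟩
  rintro rfl
  exact ⟨⟨inf_le_right, by omega⟩, inf_le_left⟩

lemma above_C4_sdiff_C3 {H : Submodule K V} (hHS : H ≤ S) (hH : finrank K H = t) :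
    above (C4 f S m t \ C3 f S m) H = C3 f H m \ C3 f S m := by
  ext F
  refine ⟨fun h ↦ ⟨⟨h.1.1.1, h.2⟩, h.1.2⟩, fun h ↦ ⟨⟨⟨h.1.1, ?_⟩, h.2⟩, h.1.2⟩⟩
  exact hH ▸ Submodule.finrank_mono (le_inf h.1.2 hHS)

variable [Finite K]

lemma ncard_C3_mul_qNumber (hf : IsSymplectic f ν) (hA : TotallyIsotropic f A)
    (ham : finrank K A < m) {N : ℚ}
    (hN : ∀ S, TotallyIsotropic f S → finrank K S = finrank K A + 1 → (C3 f S m).ncard = N) :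
    (C3 f A m).ncard * qNumber (Nat.card K) (m - finrank K A)
      = qNumber (Nat.card K) (2 * (ν - finrank K A)) * N := by
  classical
  set P := LinearMap.BilinForm.orthogonal f A
  have hAP : A ≤ P := hA.le_orthogonal le_rfl
  have hP : finrank K P = finrank K A + 2 * (ν - finrank K A) := by
    have := hf.finrank_le hA
    rw [hf.finrank_orthogonal]
    omega
  rw [← sum_ncard_above (s := between A P (finrank K A + 1)), ← card_between_succ hAP hP,
    ← nsmul_eq_mul]
  · refine sum_eq_card_nsmul fun S hS ↦ ?_
    obtain ⟨hAS, hSP, hS⟩ := mem_between.1 hS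
    rw [← hN S (hA.of_le_orthogonal hf.isAlt hAS hSP hS) hS]
    congr 2
    ext F
    exact ⟨fun h ↦ ⟨h.1.1, h.2⟩, fun h ↦ ⟨⟨h.1, hAS.trans h.2⟩, h.2⟩⟩
  · intro F ⟨hF, hAF⟩
    have hFP : F ≤ P := hF.1.le_orthogonal hAF
    rw [← card_between_succ hAF (by rw [hF.2]; omega)]
    congr 2
    ext S
    simp only [mem_filter, mem_between]
    exact ⟨fun h ↦ ⟨h.1.1, h.2, h.1.2.2⟩, fun h ↦ ⟨⟨h.1, h.2.1.trans hFP, h.2.2⟩, h.2.1⟩⟩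

theorem ncard_C3 (hf : IsSymplectic f ν) (hA : TotallyIsotropic f A) (ham : finrank K A ≤ m) :
    ((C3 f A m).ncard : ℚ) = Nprime (Nat.card K) (finrank K A) m ν := by
  induction h : m - finrank K A generalizing A with
  | zero =>
    have hAm : finrank K A = m := by omega
    rw [C3_eq_singleton ⟨hA, hAm⟩, hAm, Nprime_self, Set.ncard_singleton, Nat.cast_one]
  | succ k ih =>
    have hstep := ncard_C3_mul_qNumber hf hA (by omega)
      fun S hS hSA ↦ (ih hS (by omega) (by omega)).trans (by rw [hSA])
    rw [Nprime_eq_isoRatio_mul (two_le_natCard K) (by omega) (hf.finrank_le hA), isoRatio,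
      div_mul_eq_mul_div, eq_div_iff (qNumber_pos (by omega)).ne', hstep]

lemma ncard_C3_sdiff_C3 (hf : IsSymplectic f ν) (hS : TotallyIsotropic f S) (hAS : A ≤ S)
    (hSm : finrank K S ≤ m) :
    ((C3 f A m \ C3 f S m).ncard : ℚ)
      = Nprime (Nat.card K) (finrank K A) m ν - Nprime (Nat.card K) (finrank K S) m ν := by
  have hle : C3 f S m ⊆ C3 f A m := fun F hF ↦ ⟨hF.1, hAS.trans hF.2⟩
  rw [Set.cast_ncard_sdiff hle (Set.toFinite _), ncard_C3 hf hS hSm,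
    ncard_C3 hf (hS.mono hAS) ((Submodule.finrank_mono hAS).trans hSm)]

theorem ncard_C4 (hf : IsSymplectic f ν) (hS : S ∈ polar f (t + 1)) (htm : t + 1 ≤ m) :
    ((C4 f S m t).ncard : ℚ)
      = qNumber (Nat.card K) (t + 1) * Nprime (Nat.card K) t m ν
        - (qNumber (Nat.card K) (t + 1) - 1) * Nprime (Nat.card K) (t + 1) m ν := by
  classical
  have hC3S : ((C3 f S m).ncard : ℚ) = Nprime (Nat.card K) (t + 1) m ν := by
    rw [ncard_C3 hf hS.1 (hS.2.trans_le htm), hS.2]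
  have hsub : C3 f S m ⊆ C4 f S m t := fun F hF ↦ ⟨hF.1, by
    rw [inf_eq_right.2 hF.2, hS.2]
    omega⟩
  have hdiff : ((C4 f S m t \ C3 f S m).ncard : ℚ) = qNumber (Nat.card K) (t + 1)
      * (Nprime (Nat.card K) t m ν - Nprime (Nat.card K) (t + 1) m ν) := by
    rw [← mul_one (((C4 f S m t \ C3 f S m).ncard : ℚ)), ← sum_ncard_above fun F hF ↦ by
        exact_mod_cast card_filter_le_of_mem_C4_sdiff_C3 hS.2 hF,
      ← card_between_bot_hyperplanes hS.2, ← nsmul_eq_mul]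
    refine sum_eq_card_nsmul fun H hH ↦ ?_
    obtain ⟨-, hHS, hH⟩ := mem_between.1 hH
    rw [above_C4_sdiff_C3 hHS hH, ncard_C3_sdiff_C3 hf hS.1 hHS (hS.2.trans_le htm), hH, hS.2]
  rw [Set.cast_ncard_sdiff hsub (Set.toFinite _), hC3S] at hdiff
  linear_combination hdiff

lemma ncard_above_le (hf : IsSymplectic f ν) {Y : Set (Submodule K V)} (hY : Y ⊆ polar f m)
    (hmν : m ≤ ν) (hSm : finrank K S ≤ m) :
    ((above Y S).ncard : ℚ) ≤ Nprime (Nat.card K) (finrank K S) m ν := by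
  by_cases hS : TotallyIsotropic f S
  · have hsub : above Y S ⊆ C3 f S m := fun F hF ↦ ⟨hY hF.1, hF.2⟩
    rw [← ncard_C3 hf hS hSm]
    exact_mod_cast Set.ncard_le_ncard hsub
  · have hempty : above Y S = ∅ :=
      Set.eq_empty_of_forall_notMem fun F hF ↦ hS ((hY hF.1).1.mono hF.2)
    rw [hempty, Set.ncard_empty, Nat.cast_zero]
    exact (Nprime_pos (two_le_natCard K) hmν).le

end Counting

/-! ### Bounding a family through covers -/

lemma sum_le_add_card_sub_one_mul {ι : Type*} {s : Finset ι} {g : ι → ℚ} {c : ℚ} {i : ι}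
    (hi : i ∈ s) (hg : ∀ j ∈ s, j ≠ i → g j ≤ c) : ∑ j ∈ s, g j ≤ g i + (#s - 1) * c := by
  classical
  have herase : ∑ j ∈ s.erase i, g j ≤ #(s.erase i) • c :=
    sum_le_card_nsmul _ _ _ fun j hj ↦ hg j (mem_of_mem_erase hj) (ne_of_mem_erase hj)
  rw [← add_sum_erase s g hi]
  rw [nsmul_eq_mul, cast_card_erase_of_mem hi] at herase
  gcongr

/-- Bound, divided by the maximal number of members containing a given `t`-space, for the size of
a family having a cover of dimension `t + i`; for `i = 1` it counts the hyperplanes of the cover. -/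
def coverBound (q t i : ℕ) : ℚ :=
  if i = 1 then qNumber q (t + 1) else qNumber q (i + 1) ^ t

lemma coverBound_zero (q t : ℕ) : coverBound q t 0 = 1 := by
  simp [coverBound, qNumber_one]

lemma coverBound_one (q t : ℕ) : coverBound q t 1 = qNumber q (t + 1) :=
  if_pos rfl

lemma coverBound_of_ne_one (q t : ℕ) {i : ℕ} (hi : i ≠ 1) :
    coverBound q t i = qNumber q (i + 1) ^ t :=
  if_neg hi

lemma coverBound_nonneg (q t i : ℕ) : 0 ≤ coverBound q t i := by
  unfold coverBound
  split_ifs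
  · exact qNumber_nonneg q _
  · exact pow_nonneg (qNumber_nonneg q _) _

section Covers

variable [Finite V] {Y : Set (Submodule K V)} {T : Submodule K V} {t : ℕ} {B : ℚ}

lemma ncard_above_le_sum {W : Submodule K V} {n : ℕ} (hTn : finrank K T ≤ n) (hTW : T ≤ W)
    (hY : ∀ F ∈ Y, T ≤ F → n ≤ finrank K ↥(F ⊓ W)) :
    ((above Y T).ncard : ℚ) ≤ ∑ S ∈ between T W n, ((above Y S).ncard : ℚ) := by
  have hsub : above Y T ⊆ ⋃ S ∈ between T W n, above Y S := fun F ⟨hF, hTF⟩ ↦ by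
    obtain ⟨S, hTS, hSFW, hS⟩ := exists_le_le_finrank_eq (le_inf hTF hTW) hTn (hY F hF hTF)
    rw [le_inf_iff] at hSFW
    exact Set.mem_biUnion (mem_coe.2 (mem_between.2 ⟨hTS, hSFW.2, hS⟩)) ⟨hF, hSFW.1⟩
  exact_mod_cast (Set.ncard_le_ncard hsub (Set.toFinite _)).trans
    (Finset.set_ncard_biUnion_le _ _)

lemma ncard_le_sum_above {Z : Submodule K V} (hY : ∀ F ∈ Y, t ≤ finrank K ↥(Z ⊓ F)) :
    (Y.ncard : ℚ) ≤ ∑ S ∈ between ⊥ Z t, ((above Y S).ncard : ℚ) := by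
  have := ncard_above_le_sum (Y := Y) (by simp) bot_le fun F hF _ ↦ inf_comm Z F ▸ hY F hF
  rwa [above_bot] at this

variable [Finite K]

lemma ncard_above_le_qNumber_mul {G : Submodule K V} (hTG : finrank K ↥(T ⊓ G) < t)
    (htG : t ≤ finrank K G) (hYG : ∀ F ∈ Y, t ≤ finrank K ↥(F ⊓ G))
    (hB : ∀ S : Submodule K V, finrank K S = finrank K T + 1 → ((above Y S).ncard : ℚ) ≤ B) :
    ((above Y T).ncard : ℚ) ≤ qNumber (Nat.card K) (finrank K G - t + 1) * B := by
  obtain ⟨W, hTW, -, hW, hWF⟩ := exists_enlargement hTG htG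
  calc ((above Y T).ncard : ℚ) ≤ ∑ S ∈ between T W (finrank K T + 1), ((above Y S).ncard : ℚ) :=
        ncard_above_le_sum (Nat.le_succ _) hTW fun F hF hTF ↦ hWF F hTF (hYG F hF)
    _ ≤ #(between T W (finrank K T + 1)) • B :=
        sum_le_card_nsmul _ _ _ fun S hS ↦ hB S (mem_between.1 hS).2.2
    _ = qNumber (Nat.card K) (finrank K G - t + 1) * B := by
        rw [nsmul_eq_mul, card_between_succ hTW hW]

lemma ncard_above_le_qNumber_pow_mul {g : ℕ} (htg : t ≤ g) (hB₀ : 0 ≤ B) (k : ℕ)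
    (hG : ∀ S : Submodule K V, finrank K S < finrank K T + k → (above Y S).Nonempty →
      ∃ G : Submodule K V, finrank K G = g ∧ finrank K ↥(S ⊓ G) < t ∧
        ∀ F ∈ Y, t ≤ finrank K ↥(F ⊓ G))
    (hB : ∀ S : Submodule K V, finrank K S = finrank K T + k → ((above Y S).ncard : ℚ) ≤ B) :
    ((above Y T).ncard : ℚ) ≤ qNumber (Nat.card K) (g - t + 1) ^ k * B := by
  induction k generalizing T with
  | zero => simpa using hB T rfl
  | succ k ih =>
    have hpow : 0 ≤ qNumber (Nat.card K) (g - t + 1) ^ (k + 1) * B :=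
      mul_nonneg (pow_nonneg (qNumber_nonneg _ _) _) hB₀
    obtain hempty | hne := (above Y T).eq_empty_or_nonempty
    · simpa [hempty] using hpow
    · obtain ⟨G, rfl, hTG, hYG⟩ := hG T (by omega) hne
      rw [pow_succ', mul_assoc]
      exact ncard_above_le_qNumber_mul hTG htg hYG fun S hS ↦
        ih (fun S' hS' ↦ hG S' (by omega)) fun S' hS' ↦ hB S' (by omega)

lemma ncard_le_coverBound_mul {Z : Submodule K V} {i : ℕ} (hZ : finrank K Z = t + i)
    (hZY : ∀ F ∈ Y, t ≤ finrank K ↥(Z ⊓ F)) (hB₀ : 0 ≤ B)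
    (hB : ∀ S : Submodule K V, finrank K S = t → ((above Y S).ncard : ℚ) ≤ B) :
    (Y.ncard : ℚ) ≤ coverBound (Nat.card K) t i * B := by
  by_cases hi : i = 1
  · subst hi
    rw [coverBound_one, ← card_between_bot_hyperplanes hZ, ← nsmul_eq_mul]
    exact (ncard_le_sum_above hZY).trans
      (sum_le_card_nsmul _ _ _ fun S hS ↦ hB S (mem_between.1 hS).2.2)
  · have := ncard_above_le_qNumber_pow_mul (Y := Y) (T := ⊥) (Nat.le_add_right t i) hB₀ t
      (fun S hS _ ↦ ⟨Z, hZ, (Submodule.finrank_mono inf_le_left).trans_lt (by simpa using hS),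
        fun F hF ↦ inf_comm Z F ▸ hZY F hF⟩)
      (by simpa using hB)
    rwa [above_bot, Nat.add_sub_cancel_left, ← coverBound_of_ne_one _ _ hi] at this

end Covers

section TauCover

variable {f : V →ₗ[K] V →ₗ[K] K} {t : ℕ} {Y : Set (Submodule K V)} {Z : Submodule K V}

lemma IsTCover.tauCover_le (hZ : IsTCover f t Y Z) : tauCover f t Y ≤ finrank K Z :=
  Nat.sInf_le ⟨Z, hZ, rfl⟩

lemma IsTCover.exists_finrank_eq_tauCover (hZ : IsTCover f t Y Z) :
    ∃ W, IsTCover f t Y W ∧ finrank K W = tauCover f t Y :=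
  Nat.sInf_mem (s := {x | ∃ X, IsTCover f t Y X ∧ finrank K ↥X = x}) ⟨_, Z, hZ, rfl⟩

lemma exists_finrank_inf_lt_of_finrank_lt_tauCover (hZ : TotallyIsotropic f Z)
    (hlt : finrank K Z < tauCover f t Y) : ∃ F ∈ Y, finrank K ↥(Z ⊓ F) < t := by
  by_contra! h
  exact (IsTCover.tauCover_le ⟨hZ, h⟩).not_gt hlt

variable [FiniteDimensional K V]

lemma IsTCover.le_finrank (hZ : IsTCover f t Y Z) (hY : Y.Nonempty) : t ≤ finrank K Z :=
  let ⟨F, hF⟩ := hY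
  (hZ.2 F hF).trans (Submodule.finrank_mono inf_le_left)

lemma IsTCover.le_of_finrank_eq (hZ : IsTCover f t Y Z) (hZt : finrank K Z = t) :
    ∀ F ∈ Y, Z ≤ F := fun F hF ↦ by
  by_contra hZF
  have := finrank_inf_lt_of_not_le hZF
  have := hZ.2 F hF
  omega

end TauCover

/-- The families `Y ⊆ 𝒫_mY` and `X ⊆ 𝒫_mX` are cross `t`-intersecting. -/
structure CrossIntersecting (f : V →ₗ[K] V →ₗ[K] K) (t mY mX : ℕ) (Y X : Set (Submodule K V)) :
    Prop where
  subset_left : Y ⊆ polar f mY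
  subset_right : X ⊆ polar f mX
  le_finrank_inf : ∀ F ∈ Y, ∀ G ∈ X, t ≤ finrank K ↥(F ⊓ G)

namespace CrossIntersecting

variable {f : V →ₗ[K] V →ₗ[K] K} {ν t mY mX : ℕ} {Y X : Set (Submodule K V)}

lemma symm (h : CrossIntersecting f t mY mX Y X) : CrossIntersecting f t mX mY X Y :=
  ⟨h.subset_right, h.subset_left, fun G hG F hF ↦ inf_comm F G ▸ h.le_finrank_inf F hF G hG⟩

lemma isTCover (h : CrossIntersecting f t mY mX Y X) {F : Submodule K V} (hF : F ∈ Y) :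
    IsTCover f t X F :=
  ⟨(h.subset_left hF).1, h.le_finrank_inf F hF⟩

lemma exists_minimal_isTCover [FiniteDimensional K V] (h : CrossIntersecting f t mY mX Y X)
    (hY : Y.Nonempty) (hX : X.Nonempty) :
    ∃ i Z, t + i ≤ mY ∧ IsTCover f t X Z ∧ finrank K Z = t + i ∧ tauCover f t X = t + i := by
  obtain ⟨F, hF⟩ := hY
  obtain ⟨Z, hZ, hZτ⟩ := (h.isTCover hF).exists_finrank_eq_tauCover
  have htZ := hZ.le_finrank hX
  have hτF := (h.isTCover hF).tauCover_le
  rw [(h.subset_left hF).2] at hτF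
  exact ⟨finrank K Z - t, Z, by omega, hZ, by omega, by omega⟩

variable [Finite K] [Finite V]

lemma ncard_above_le (h : CrossIntersecting f t mY mX Y X) (hf : IsSymplectic f ν) (hmν : mY ≤ ν)
    (htX : t ≤ mX) {T G : Submodule K V} (hTm : finrank K T + 1 ≤ mY) (hG : G ∈ X)
    (hTG : finrank K ↥(T ⊓ G) < t) :
    ((above Y T).ncard : ℚ) ≤
      qNumber (Nat.card K) (mX - t + 1) * Nprime (Nat.card K) (finrank K T + 1) mY ν := by
  obtain ⟨-, rfl⟩ := h.subset_right hG
  refine ncard_above_le_qNumber_mul hTG htX (fun F hF ↦ h.le_finrank_inf F hF G hG) fun S hS ↦ ?_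
  exact hS ▸ _root_.ncard_above_le hf h.subset_left hmν (hS.trans_le hTm)

lemma ncard_above_le_of_not_forall_le (h : CrossIntersecting f t mY mX Y X) (hf : IsSymplectic f ν)
    (hmν : mY ≤ ν) (htX : t ≤ mX) (htY : t + 1 ≤ mY) {T : Submodule K V} (hT : finrank K T = t)
    (hTX : ¬∀ G ∈ X, T ≤ G) :
    ((above Y T).ncard : ℚ) ≤
      qNumber (Nat.card K) (mX - t + 1) * Nprime (Nat.card K) (t + 1) mY ν := by
  push Not at hTX
  obtain ⟨G, hG, hTG⟩ := hTX
  have := h.ncard_above_le hf hmν htX (by omega) hG (hT ▸ finrank_inf_lt_of_not_le hTG)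
  rwa [hT] at this

lemma ncard_le_of_le_tauCover (h : CrossIntersecting f t mY mX Y X) (hf : IsSymplectic f ν)
    (hmν : mY ≤ ν) (htX : t ≤ mX) {i j : ℕ} (hi : t + i ≤ mY) (hτ : t + i ≤ tauCover f t X)
    {Z : Submodule K V} (hZ : IsTCover f t Y Z) (hZj : finrank K Z = t + j) :
    (Y.ncard : ℚ) ≤ coverBound (Nat.card K) t j *
      (qNumber (Nat.card K) (mX - t + 1) ^ i * Nprime (Nat.card K) (t + i) mY ν) := by
  have hN : 0 ≤ Nprime (Nat.card K) (t + i) mY ν := (Nprime_pos (two_le_natCard K) hmν).le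
  refine ncard_le_coverBound_mul hZj hZ.2 (mul_nonneg (pow_nonneg (qNumber_nonneg _ _) _) hN)
    fun T hT ↦ ncard_above_le_qNumber_pow_mul htX hN i ?_ ?_
  · rintro S hS ⟨F, hF, hSF⟩
    obtain ⟨G, hG, hSG⟩ := exists_finrank_inf_lt_of_finrank_lt_tauCover
      ((h.subset_left hF).1.mono hSF) (by omega : finrank K S < tauCover f t X)
    exact ⟨G, (h.subset_right hG).2, hSG, fun F hF ↦ h.le_finrank_inf F hF G hG⟩
  · rw [hT]
    exact fun S hS ↦ hS ▸ _root_.ncard_above_le hf h.subset_left hmν (by omega)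

lemma ncard_right_le_of_isTCover (h : CrossIntersecting f t mY mX Y X) (hf : IsSymplectic f ν)
    (hmν : mX ≤ ν) (htY : t ≤ mY) (htX : t + 1 ≤ mX) {S : Submodule K V} (hS : IsTCover f t X S)
    (hSt : finrank K S = t + 1) (hSY : ¬∀ F ∈ Y, S ≤ F) :
    (X.ncard : ℚ) ≤ Nprime (Nat.card K) t mX ν + qNumber (Nat.card K) (t + 1) *
      (qNumber (Nat.card K) (mY - t + 1) * Nprime (Nat.card K) (t + 1) mX ν) := by
  set β := qNumber (Nat.card K) (mY - t + 1) * Nprime (Nat.card K) (t + 1) mX ν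
  have hβ : 0 ≤ β := mul_nonneg (qNumber_nonneg _ _) (Nprime_pos (two_le_natCard K) hmν).le
  have hN : 0 ≤ Nprime (Nat.card K) t mX ν := (Nprime_pos (two_le_natCard K) hmν).le
  have hnotcore : ∀ H ∈ between ⊥ S t, (¬∀ F ∈ Y, H ≤ F) → ((above X H).ncard : ℚ) ≤ β :=
    fun H hH ↦ h.symm.ncard_above_le_of_not_forall_le hf hmν htY htX (mem_between.1 hH).2.2
  have hsum := ncard_le_sum_above hS.2
  -- Two hyperplanes span `S`, so at most one of them lies in every member of `Y`.
  by_cases hcore : ∃ H₀ ∈ between ⊥ S t, ∀ F ∈ Y, H₀ ≤ F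
  · obtain ⟨H₀, hH₀, hH₀Y⟩ := hcore
    have hother : ∀ H ∈ between ⊥ S t, H ≠ H₀ → ((above X H).ncard : ℚ) ≤ β := by
      refine fun H hH hne ↦ hnotcore H hH fun hHY ↦ hSY fun F hF ↦ ?_
      obtain ⟨-, hHS, hHt⟩ := mem_between.1 hH
      obtain ⟨-, hH₀S, hH₀t⟩ := mem_between.1 hH₀
      rw [← sup_eq_of_finrank_eq_add_one hHS hH₀S hne (hHt.trans hH₀t.symm) (by omega)]
      exact sup_le (hHY F hF) (hH₀Y F hF)
    have hH₀N := _root_.ncard_above_le (S := H₀) hf h.subset_right hmν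
      (by have := (mem_between.1 hH₀).2.2; omega)
    rw [(mem_between.1 hH₀).2.2] at hH₀N
    have := sum_le_add_card_sub_one_mul hH₀ hother
    rw [card_between_bot_hyperplanes hSt] at this
    linarith
  · push Not at hcore
    have := sum_le_card_nsmul _ _ _ fun H hH ↦ hnotcore H hH (by simpa using hcore H hH)
    rw [nsmul_eq_mul, card_between_bot_hyperplanes hSt] at this
    linarith

end CrossIntersecting

/-! ### Families with a core crossing subspaces of dimension `2t` -/

section Enlargement

variable [Finite V] {f : V →ₗ[K] V →ₗ[K] K} {ν t m : ℕ} {Y X : Set (Submodule K V)}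
  {T W G : Submodule K V}

lemma sup_span_singleton_mem_between (hTW : T ≤ W) {z : V} (hzW : z ∈ W) (hzT : z ∉ T) :
    T ⊔ K ∙ z ∈ between T W (finrank K T + 1) :=
  mem_between.2 ⟨le_sup_left, sup_le hTW ((Submodule.span_singleton_le_iff_mem z W).2 hzW),
    Submodule.finrank_sup_span_singleton hzT⟩

lemma TotallyIsotropic.of_between (hf : f.IsAlt) (hT : TotallyIsotropic f T)
    (hG : TotallyIsotropic f G) (hTW : T ≤ W) (hWG : W ≤ T ⊔ G)
    (hext : ∀ S ∈ between T W (finrank K T + 1), TotallyIsotropic f S) :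
    TotallyIsotropic f W := by
  have hWT : W ≤ LinearMap.BilinForm.orthogonal f T := fun z hzW ↦ by
    by_cases hzT : z ∈ T
    · exact hT.le_orthogonal le_rfl hzT
    · exact (hext _ (sup_span_singleton_mem_between hTW hzW hzT)).le_orthogonal le_sup_left
        (Submodule.mem_sup_right (Submodule.mem_span_singleton_self z))
  have hmodular : T ⊔ W ⊓ G = W := by
    rw [inf_comm, ← sup_inf_assoc_of_le G hTW, inf_eq_right.2 hWG]
  exact hmodular ▸ hT.sup hf (hG.mono inf_le_right) (inf_le_left.trans hWT)

lemma le_of_between_inf (hTW : T ≤ W) (hT : finrank K T = t) (hW : finrank K W = 2 * t + 1)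
    (hG : finrank K G = 2 * t) (hTG : ¬T ≤ G)
    (hext : ∀ S ∈ between T W (t + 1), t ≤ finrank K ↥(S ⊓ G)) : G ≤ W := by
  have hlt : finrank K ↥(T ⊓ G) < t := hT ▸ finrank_inf_lt_of_not_le hTG
  have hmeets : ∀ S ∈ between T W (t + 1), S = T ⊔ S ⊓ G ∧ finrank K ↥(T ⊓ G) + 1 = t := by
    intro S hS
    obtain ⟨hTS, -, hSt⟩ := mem_between.1 hS
    have hSG := hext S hS
    have hsup := Submodule.finrank_sup_add_finrank_inf_eq T (S ⊓ G)
    rw [← inf_assoc, inf_eq_left.2 hTS] at hsup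
    have hle : T ⊔ S ⊓ G ≤ S := sup_le hTS inf_le_left
    have := Submodule.finrank_mono hle
    exact ⟨(Submodule.eq_of_le_of_finrank_le hle (by omega)).symm, by omega⟩
  have hWsup : W ≤ T ⊔ G ⊓ W := fun z hzW ↦ by
    by_cases hzT : z ∈ T
    · exact Submodule.mem_sup_left hzT
    · have hS := hT ▸ sup_span_singleton_mem_between hTW hzW hzT
      have hzS : z ∈ T ⊔ K ∙ z := Submodule.mem_sup_right (Submodule.mem_span_singleton_self z)
      rw [(hmeets _ hS).1] at hzS
      refine sup_le_sup_left (le_inf inf_le_right (inf_le_left.trans ?_)) T hzS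
      exact (mem_between.1 hS).2.1
  obtain ⟨S, hTS, hSW, hSt⟩ :=
    exists_le_le_finrank_eq hTW (n := t + 1) (by omega) (by omega)
  have hTGt := (hmeets S (mem_between.2 ⟨hTS, hSW, hSt⟩)).2
  have hsup := Submodule.finrank_sup_add_finrank_inf_eq T (G ⊓ W)
  rw [inf_comm G W, ← inf_assoc, inf_eq_left.2 hTW, inf_comm W G] at hsup
  have := Submodule.finrank_mono hWsup
  have hGW : G ⊓ W = G := Submodule.eq_of_le_of_finrank_le inf_le_left (by omega)
  exact inf_eq_left.1 hGW

variable [Finite K]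

lemma ncard_le_of_subset_polar_two_mul (hf : IsSymplectic f ν) (hX : X ⊆ polar f (2 * t))
    (htν : 2 * t ≤ ν) (hTW : T ≤ W) (hT : finrank K T = t) (hW : finrank K W = 2 * t + 1)
    (hext : ∀ S ∈ between T W (t + 1), ∀ G ∈ X, t ≤ finrank K ↥(S ⊓ G)) :
    (X.ncard : ℚ) ≤ Nprime (Nat.card K) t (2 * t) ν + qNumber (Nat.card K) (2 * t + 1) := by
  have hsub : X ⊆ above X T ∪ between ⊥ W (2 * t) := fun G hG ↦ by
    by_cases hTG : T ≤ G
    · exact Or.inl ⟨hG, hTG⟩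
    · refine Or.inr (mem_coe.2 (mem_between.2 ⟨bot_le, ?_, (hX hG).2⟩))
      exact le_of_between_inf hTW hT hW (hX hG).2 hTG fun S hS ↦ hext S hS G hG
  have hcard : (X.ncard : ℚ) ≤ (above X T).ncard + #(between ⊥ W (2 * t)) := by
    rw [← Set.ncard_coe_finset]
    exact_mod_cast (Set.ncard_le_ncard hsub).trans (Set.ncard_union_le _ _)
  have hXT := ncard_above_le (S := T) hf hX htν (by omega)
  rw [card_between_bot_hyperplanes hW] at hcard
  rw [hT] at hXT
  linarith

/-- Every member of `Y` lies above one of the `[n]` extensions of `T` inside `W`; since `W` is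
isotropic, two extensions have common members, which are counted only once. -/
lemma ncard_le_of_totallyIsotropic (hf : IsSymplectic f ν) (hY : Y ⊆ polar f m)
    (htm : t + 2 ≤ m) (hT : finrank K T = t) (hTY : ∀ F ∈ Y, T ≤ F) (hTW : T ≤ W)
    (hWf : TotallyIsotropic f W) {n : ℕ} (hn : 0 < n) (hW : finrank K W = t + n)
    (hYW : ∀ F ∈ Y, t + 1 ≤ finrank K ↥(F ⊓ W)) :
    (Y.ncard : ℚ) ≤ qNumber (Nat.card K) n * Nprime (Nat.card K) (t + 1) m ν
      - (qNumber (Nat.card K) n - 1) * Nprime (Nat.card K) (t + 2) m ν := by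
  subst hT
  obtain ⟨S₀, hTS₀, hS₀W, hS₀⟩ :=
    exists_le_le_finrank_eq hTW (Nat.le_succ (finrank K T)) (by omega)
  have hrest : ∀ S ∈ between T W (finrank K T + 1), S ≠ S₀ →
      ((above (Y \ C3 f S₀ m) S).ncard : ℚ) ≤
        Nprime (Nat.card K) (finrank K T + 1) m ν - Nprime (Nat.card K) (finrank K T + 2) m ν := by
    intro S hS hne
    obtain ⟨hTS, hSW, hSdim⟩ := mem_between.1 hS
    have hsup := finrank_sup_eq_add_two hTS hTS₀ hne hSdim hS₀
    have hsub : above (Y \ C3 f S₀ m) S ⊆ C3 f S m \ C3 f (S ⊔ S₀) m := fun F ⟨⟨hF, hFS₀⟩, hSF⟩ ↦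
      ⟨⟨hY hF, hSF⟩, fun h ↦ hFS₀ ⟨hY hF, le_sup_right.trans h.2⟩⟩
    rw [← hSdim, ← hsup, ← ncard_C3_sdiff_C3 hf (hWf.mono (sup_le hSW hS₀W)) le_sup_left (by omega)]
    exact_mod_cast Set.ncard_le_ncard hsub
  have hempty : above (Y \ C3 f S₀ m) S₀ = ∅ :=
    Set.eq_empty_of_forall_notMem fun F hF ↦ hF.1.2 ⟨hY hF.1.1, hF.2⟩
  have habove : above (Y \ C3 f S₀ m) T = Y \ C3 f S₀ m :=
    Set.sep_eq_self_iff_mem_true.2 fun F hF ↦ hTY F hF.1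
  have hsum := ncard_above_le_sum (Y := Y \ C3 f S₀ m) (Nat.le_succ _) hTW
    fun F hF _ ↦ hYW F hF.1
  have hbound := sum_le_add_card_sub_one_mul (mem_between.2 ⟨hTS₀, hS₀W, hS₀⟩) hrest
  rw [hempty, Set.ncard_empty, card_between_succ hTW hW] at hbound
  have hsplit : (Y.ncard : ℚ) ≤ (Y \ C3 f S₀ m).ncard + (C3 f S₀ m).ncard := by
    exact_mod_cast Set.ncard_le_ncard_sdiff_add_ncard Y (C3 f S₀ m)
  rw [ncard_C3 hf (hWf.mono hS₀W) (by omega), hS₀] at hsplit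
  rw [habove] at hsum
  push_cast at hbound
  linarith

end Enlargement

namespace CrossIntersecting

variable [Finite K] [Finite V] {f : V →ₗ[K] V →ₗ[K] K} {ν t mY : ℕ} {Y X : Set (Submodule K V)}
  {T : Submodule K V}

lemma ncard_le_of_not_isTCover {mX n : ℕ} (h : CrossIntersecting f t mY mX Y X)
    (hf : IsSymplectic f ν) (hmν : mY ≤ ν) (htX : t ≤ mX) (htY : t + 2 ≤ mY)
    {W S₀ : Submodule K V} (hT : finrank K T = t) (hTY : ∀ F ∈ Y, T ≤ F) (hTW : T ≤ W)
    (hW : finrank K W = t + n) (hYW : ∀ F ∈ Y, t + 1 ≤ finrank K ↥(F ⊓ W))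
    (hS₀ : S₀ ∈ between T W (t + 1)) (hS₀X : ¬IsTCover f t X S₀) :
    (Y.ncard : ℚ) ≤ (qNumber (Nat.card K) n - 1) * Nprime (Nat.card K) (t + 1) mY ν
      + qNumber (Nat.card K) (mX - t + 1) * Nprime (Nat.card K) (t + 2) mY ν := by
  subst hT
  have hS₀T := (mem_between.1 hS₀).2.2
  have hbad : ((above Y S₀).ncard : ℚ) ≤
      qNumber (Nat.card K) (mX - finrank K T + 1) * Nprime (Nat.card K) (finrank K T + 2) mY ν := by
    obtain hempty | ⟨F, hF, hS₀F⟩ := (above Y S₀).eq_empty_or_nonempty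
    · rw [hempty, Set.ncard_empty, Nat.cast_zero]
      exact mul_nonneg (qNumber_nonneg _ _) (Nprime_pos (two_le_natCard K) hmν).le
    · have hmeets : ∃ G ∈ X, finrank K ↥(S₀ ⊓ G) < finrank K T := by
        by_contra! hcov
        exact hS₀X ⟨(h.subset_left hF).1.mono hS₀F, hcov⟩
      obtain ⟨G, hG, hS₀G⟩ := hmeets
      have := h.ncard_above_le hf hmν htX (by omega) hG hS₀G
      rwa [hS₀T] at this
  have hsum := ncard_above_le_sum (Y := Y) (Nat.le_succ _) hTW fun F hF _ ↦ hYW F hF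
  have hbound := sum_le_add_card_sub_one_mul hS₀ fun S hS _ ↦ (mem_between.1 hS).2.2 ▸
    _root_.ncard_above_le hf h.subset_left hmν ((mem_between.1 hS).2.2.trans_le (by omega))
  rw [card_between_succ hTW hW] at hbound
  rw [show above Y T = Y from Set.sep_eq_self_iff_mem_true.2 hTY] at hsum
  linarith

lemma ncard_le_or_of_two_mul (h : CrossIntersecting f t mY (2 * t) Y X) (hf : IsSymplectic f ν)
    (hmν : mY ≤ ν) (htν : 2 * t ≤ ν) (htY : t + 2 ≤ mY) (hT : T ∈ polar f t)
    (hTY : ∀ F ∈ Y, T ≤ F) (hTX : ¬∀ G ∈ X, T ≤ G) :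
    (Y.ncard : ℚ) ≤ (qNumber (Nat.card K) (t + 1) - 1) * Nprime (Nat.card K) (t + 1) mY ν
        + qNumber (Nat.card K) (t + 1) * Nprime (Nat.card K) (t + 2) mY ν ∨
      (Y.ncard : ℚ) ≤ qNumber (Nat.card K) (t + 1) * Nprime (Nat.card K) (t + 1) mY ν
        - (qNumber (Nat.card K) (t + 1) - 1) * Nprime (Nat.card K) (t + 2) mY ν ∧
      (X.ncard : ℚ) ≤ Nprime (Nat.card K) t (2 * t) ν + qNumber (Nat.card K) (2 * t + 1) := by
  obtain ⟨hTf, hTt⟩ := hT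
  push Not at hTX
  obtain ⟨G, hG, hTG⟩ := hTX
  obtain ⟨hGf, hGt⟩ := h.subset_right hG
  obtain ⟨W, hTW, hWG, hW, hWF⟩ := exists_enlargement
    (hTt ▸ finrank_inf_lt_of_not_le hTG : finrank K ↥(T ⊓ G) < t) (by omega)
  have hW' : finrank K W = t + (t + 1) := by omega
  have hYW : ∀ F ∈ Y, t + 1 ≤ finrank K ↥(F ⊓ W) :=
    fun F hF ↦ hTt ▸ hWF F (hTY F hF) (h.le_finrank_inf F hF G hG)
  by_cases hall : ∀ S ∈ between T W (t + 1), IsTCover f t X S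
  · have hWf : TotallyIsotropic f W :=
      hTf.of_between hf.isAlt hGf hTW hWG fun S hS ↦ (hall S (hTt ▸ hS)).1
    exact Or.inr ⟨ncard_le_of_totallyIsotropic hf h.subset_left htY hTt hTY hTW hWf
      t.succ_pos hW' hYW, ncard_le_of_subset_polar_two_mul hf h.subset_right htν hTW hTt
      (by omega) fun S hS ↦ (hall S hS).2⟩
  · push Not at hall
    obtain ⟨S₀, hS₀, hS₀X⟩ := hall
    have := h.ncard_le_of_not_isTCover hf hmν (by omega) htY hTt hTY hTW hW' hYW hS₀ hS₀X
    rw [show 2 * t - t + 1 = t + 1 by omega] at this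
    exact Or.inl this

end CrossIntersecting

/-! ### Numerical estimates -/

section Estimates

variable {q ν t m m' a i mY mX m₁ m₂ : ℕ}

lemma qNumber_succ_sq (q n : ℕ) :
    qNumber q (n + 1) ^ 2 = qNumber q n * qNumber q (n + 2) + (q : ℚ) ^ n := by
  rw [qNumber_succ q (n + 1), qNumber_succ]
  linear_combination qNumber_mul_sub_one q n

lemma qNumber_succ_le_sq_mul (hq : 2 ≤ q) (n : ℕ) (hn : 0 < n) :
    qNumber q (n + 1) ≤ (q : ℚ) ^ 2 * qNumber q n := by
  have hq' : (2 : ℚ) ≤ q := by exact_mod_cast hq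
  exact (qNumber_succ_le_mul hn).trans
    (mul_le_mul_of_nonneg_right (by nlinarith) (qNumber_nonneg q n))

lemma qNumber_three_pow_le (hq : 2 ≤ q) (ht : 0 < t) :
    qNumber q 3 ^ t ≤ 7 / 8 * ((q : ℚ) ^ 3) ^ t := by
  have hq' : (2 : ℚ) ≤ q := by exact_mod_cast hq
  have hthree : qNumber q 3 ≤ 7 / 8 * (q : ℚ) ^ 3 := by
    rw [qNumber_succ, qNumber_succ, qNumber_one]
    nlinarith [mul_nonneg (sq_nonneg (q : ℚ)) (sub_nonneg.2 hq')]
  calc qNumber q 3 ^ t ≤ (7 / 8 * (q : ℚ) ^ 3) ^ t := by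
        gcongr
        exact qNumber_nonneg q 3
    _ = (7 / 8) ^ t * ((q : ℚ) ^ 3) ^ t := mul_pow _ _ _
    _ ≤ 7 / 8 * ((q : ℚ) ^ 3) ^ t := by
        gcongr
        exact pow_le_of_le_one (by norm_num) (by norm_num) ht.ne'

lemma sq_mul_isoRatio_succ_le (ham : a + 1 < m) (haν : a < ν) :
    (q : ℚ) ^ 2 * isoRatio q ν m (a + 1) ≤ (q + 1) * isoRatio q ν m a := by
  have hnum : (q : ℚ) ^ 2 * qNumber q (2 * (ν - (a + 1))) ≤ qNumber q (2 * (ν - a)) :=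
    (pow_mul_qNumber_le q 2 _).trans_eq (by congr 1; omega)
  have hden : qNumber q (m - a) ≤ (q + 1) * qNumber q (m - (a + 1)) := by
    rw [show m - a = m - (a + 1) + 1 by omega]
    exact qNumber_succ_le_mul (by omega)
  rw [isoRatio, isoRatio, ← mul_div_assoc, ← mul_div_assoc,
    div_le_div_iff₀ (qNumber_pos (by omega)) (qNumber_pos (by omega))]
  calc _ ≤ qNumber q (2 * (ν - a)) * ((q + 1) * qNumber q (m - (a + 1))) :=
        mul_le_mul hnum hden (qNumber_nonneg _ _) (qNumber_nonneg _ _)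
    _ = _ := by ring

lemma qNumber_mul_isoRatio_anti (ham : a < m) (hmm : m ≤ m') :
    qNumber q (m' - a + 1) * isoRatio q ν m' a ≤ qNumber q (m - a + 1) * isoRatio q ν m a := by
  have hm : 0 < qNumber q (m - a) := qNumber_pos (by omega)
  have hm' : 0 < qNumber q (m' - a) := qNumber_pos (by omega)
  have hle : qNumber q (m - a) ≤ qNumber q (m' - a) := qNumber_mono q (by omega)
  rw [isoRatio, isoRatio, ← mul_div_assoc, ← mul_div_assoc, div_le_div_iff₀ hm' hm,
    qNumber_succ, qNumber_succ]
  linarith [mul_le_mul_of_nonneg_left hle (qNumber_nonneg q (2 * (ν - a)))]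

lemma coverBound_two_mul_le (hq : 2 ≤ q) (ht : 0 < t) (hY : t + 2 ≤ mY) (hX : t ≤ mX)
    (hν : 2 * mX + mY + t + 3 ≤ 2 * ν) :
    8 * (coverBound q t 2 * qNumber q (mX - t + 1) ^ 2) ≤
      7 * (qNumber q (t + 1) * isoRatio q ν mY (t + 1)) := by
  have hq' : (2 : ℚ) ≤ q := by exact_mod_cast hq
  obtain ⟨k, rfl⟩ := Nat.exists_eq_add_of_le hX
  rw [coverBound_of_ne_one q t (by norm_num), Nat.add_sub_cancel_left]
  calc 8 * (qNumber q 3 ^ t * qNumber q (k + 1) ^ 2)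
      ≤ 8 * (7 / 8 * ((q : ℚ) ^ 3) ^ t * (2 * (q : ℚ) ^ k) ^ 2) := by
        gcongr
        exacts [qNumber_three_pow_le hq ht, qNumber_nonneg _ _, qNumber_succ_le hq k]
    _ = 7 * ((q : ℚ) ^ t * ((q : ℚ) ^ (2 * (t + k)) * 2 ^ 2)) := by ring
    _ ≤ 7 * ((q : ℚ) ^ t * ((q : ℚ) ^ (2 * (t + k)) * (q : ℚ) ^ 2)) := by gcongr
    _ ≤ 7 * (qNumber q (t + 1) * isoRatio q ν mY (t + 1)) := by
        rw [← pow_add _ _ 2]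
        gcongr
        exacts [qNumber_nonneg _ _, pow_le_qNumber_succ q t,
          pow_le_isoRatio (by omega) (by omega)]

lemma coverBound_succ_mul_le (hq : 2 ≤ q) (hi : 2 ≤ i) (hY : t + (i + 1) ≤ mY) (hX : t ≤ mX)
    (hν : 2 * mY + mX + t + 3 ≤ 2 * ν) :
    coverBound q t (i + 1) * qNumber q (mX - t + 1) ≤
      coverBound q t i * isoRatio q ν mY (t + i) := by
  have hq' : (2 : ℚ) ≤ q := by exact_mod_cast hq
  obtain ⟨k, rfl⟩ := Nat.exists_eq_add_of_le hX
  rw [coverBound_of_ne_one q t (by omega), coverBound_of_ne_one q t (by omega),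
    Nat.add_sub_cancel_left]
  have hi0 := qNumber_nonneg q (i + 1)
  calc qNumber q (i + 1 + 1) ^ t * qNumber q (k + 1)
      ≤ ((q : ℚ) ^ 2 * qNumber q (i + 1)) ^ t * (2 * (q : ℚ) ^ k) := by
        gcongr
        exacts [qNumber_nonneg _ _, qNumber_nonneg _ _,
          qNumber_succ_le_sq_mul hq _ i.succ_pos, qNumber_succ_le hq k]
    _ = qNumber q (i + 1) ^ t * ((q : ℚ) ^ (2 * t + k) * 2) := by ring
    _ ≤ qNumber q (i + 1) ^ t * ((q : ℚ) ^ (2 * t + k) * q) := by gcongr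
    _ ≤ qNumber q (i + 1) ^ t * isoRatio q ν mY (t + i) := by
        rw [← pow_succ]
        gcongr
        exact pow_le_isoRatio (by omega) (by omega)

lemma coverBound_mul_Nprime_le_of_two_le (hq : 2 ≤ q) (ht : 0 < t) (hX : t ≤ mX)
    (hXν : 2 * mX + mY + t + 3 ≤ 2 * ν) (hYν : 2 * mY + mX + t + 3 ≤ 2 * ν) (hi : 2 ≤ i)
    (hY : t + i ≤ mY) :
    8 * (coverBound q t i * (qNumber q (mX - t + 1) ^ i * Nprime q (t + i) mY ν)) ≤
      7 * (qNumber q (t + 1) * Nprime q (t + 1) mY ν) := by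
  have hmν : mY ≤ ν := by omega
  induction i, hi using Nat.le_induction with
  | base =>
    rw [Nprime_eq_isoRatio_mul (a := t + 1) hq (by omega) (by omega)]
    linarith [mul_le_mul_of_nonneg_right (coverBound_two_mul_le hq ht hY hX hXν)
      (Nprime_pos (a := t + 2) hq hmν).le]
  | succ i hi ih =>
    refine le_trans ?_ (ih (by omega))
    rw [Nprime_eq_isoRatio_mul (a := t + i) hq (by omega) (by omega), pow_succ, ← add_assoc]
    linarith [mul_le_mul_of_nonneg_right (coverBound_succ_mul_le hq hi hY hX hYν)
      (mul_nonneg (pow_nonneg (qNumber_nonneg q (mX - t + 1)) i)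
        (Nprime_pos (a := t + i + 1) hq hmν).le)]

lemma coverBound_mul_Nprime_le (hq : 2 ≤ q) (ht : 0 < t) (hX : t ≤ mX)
    (hXν : 2 * mX + mY + t + 3 ≤ 2 * ν) (hYν : 2 * mY + mX + t + 3 ≤ 2 * ν) (hi : 0 < i)
    (hY : t + i ≤ mY) :
    coverBound q t i * (qNumber q (mX - t + 1) ^ i * Nprime q (t + i) mY ν) ≤
      qNumber q (t + 1) * (qNumber q (mX - t + 1) * Nprime q (t + 1) mY ν) := by
  rcases Nat.lt_or_ge 1 i with hi2 | hi1
  · have hN : 0 ≤ qNumber q (t + 1) * Nprime q (t + 1) mY ν :=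
      mul_nonneg (qNumber_nonneg _ _) (Nprime_pos hq (by omega)).le
    have hdecay := coverBound_mul_Nprime_le_of_two_le hq ht hX hXν hYν hi2 hY
    linarith [le_mul_of_one_le_left hN (one_le_qNumber_succ q (mX - t))]
  · obtain rfl : i = 1 := by omega
    rw [coverBound_one, pow_one]

lemma two_mul_qNumber_mul_le_isoRatio (hq : 2 ≤ q) (ht : 0 < t) (hm : m₂ ≤ m₁) (hmt : t < m₂)
    (hν : 2 * m₁ + m₂ + t + 3 ≤ 2 * ν) :
    2 * (qNumber q (t + 1) * (qNumber q (m₁ - t + 1) * qNumber q (m₂ - t + 1))) ≤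
      isoRatio q ν m₂ t := by
  have hq' : (2 : ℚ) ≤ q := by exact_mod_cast hq
  calc 2 * (qNumber q (t + 1) * (qNumber q (m₁ - t + 1) * qNumber q (m₂ - t + 1)))
      ≤ 2 * (2 * (q : ℚ) ^ t * (2 * (q : ℚ) ^ (m₁ - t) * (2 * (q : ℚ) ^ (m₂ - t)))) := by
        gcongr
        exacts [mul_nonneg (qNumber_nonneg _ _) (qNumber_nonneg _ _),
          qNumber_succ_le hq _, qNumber_nonneg _ _, qNumber_succ_le hq _, qNumber_succ_le hq _]
    _ = (q : ℚ) ^ (t + (m₁ - t) + (m₂ - t)) * 2 ^ 4 := by ring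
    _ ≤ (q : ℚ) ^ (t + (m₁ - t) + (m₂ - t)) * (q : ℚ) ^ 4 := by gcongr
    _ = (q : ℚ) ^ (t + (m₁ - t) + (m₂ - t) + 4) := (pow_add _ _ _).symm
    _ ≤ isoRatio q ν m₂ t := pow_le_isoRatio (by omega) (by omega)

/-- The relative margin `1 / (4 q ^ t)` by which the leading term of every competing product falls
short of that of the extremal one. -/
def gap (q t : ℕ) : ℚ :=
  1 / (4 * (q : ℚ) ^ t)

lemma gap_nonneg (q t : ℕ) : 0 ≤ gap q t := by
  unfold gap
  positivity

lemma gap_mul_pow (hq : 2 ≤ q) (t : ℕ) : gap q t * (q : ℚ) ^ t = 1 / 4 := by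
  unfold gap
  field_simp

lemma gap_le (hq : 2 ≤ q) (ht : 0 < t) : gap q t ≤ 1 / 8 := by
  have hq' : (2 : ℚ) ≤ q := by exact_mod_cast hq
  have hpow : (2 : ℚ) ≤ (q : ℚ) ^ t := hq'.trans (le_self_pow₀ (by linarith) ht.ne')
  nlinarith [gap_mul_pow hq t, gap_nonneg q t]

lemma gap_mul_qNumber_le (hq : 2 ≤ q) (t : ℕ) : gap q t * qNumber q (t + 1) ≤ 1 / 2 := by
  linarith [mul_le_mul_of_nonneg_left (qNumber_succ_le hq t) (gap_nonneg q t), gap_mul_pow hq t]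

lemma one_lt_gap_sq_mul_isoRatio (hq : 2 ≤ q) (htm : t < m) (hν : 3 * m + t + 3 ≤ 2 * ν) :
    1 < gap q t ^ 2 * isoRatio q ν m t := by
  have hq' : (2 : ℚ) ≤ q := by exact_mod_cast hq
  calc (1 : ℚ) < (gap q t * (q : ℚ) ^ t) ^ 2 * 2 ^ 5 := by rw [gap_mul_pow hq]; norm_num
    _ ≤ (gap q t * (q : ℚ) ^ t) ^ 2 * (q : ℚ) ^ 5 := by gcongr
    _ = gap q t ^ 2 * (q : ℚ) ^ (2 * t + 5) := by ring
    _ ≤ gap q t ^ 2 * isoRatio q ν m t := by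
        gcongr
        exact pow_le_isoRatio htm (by omega)

lemma qNumber_mul_le_gap_mul_isoRatio (hq : 2 ≤ q) (hY : t < mY) (hX : t < mX)
    (hν : 2 * mY + mX + t + 3 ≤ 2 * ν) :
    qNumber q (t + 1) * qNumber q (mY - t + 1) ≤ gap q t * isoRatio q ν mX t := by
  have hq' : (2 : ℚ) ≤ q := by exact_mod_cast hq
  have hgap := gap_nonneg q t
  obtain ⟨k, rfl⟩ := Nat.exists_eq_add_of_le hY.le
  rw [Nat.add_sub_cancel_left]
  calc qNumber q (t + 1) * qNumber q (k + 1) ≤ 2 * (q : ℚ) ^ t * (2 * (q : ℚ) ^ k) := by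
        gcongr
        exacts [qNumber_nonneg _ _, qNumber_succ_le hq t, qNumber_succ_le hq k]
    _ = gap q t * (q : ℚ) ^ t * ((q : ℚ) ^ (t + k) * 2 ^ 4) := by rw [gap_mul_pow hq]; ring
    _ ≤ gap q t * (q : ℚ) ^ t * ((q : ℚ) ^ (t + k) * (q : ℚ) ^ 4) := by gcongr
    _ = gap q t * (q : ℚ) ^ (2 * t + k + 4) := by ring
    _ ≤ gap q t * isoRatio q ν mX t := by
        gcongr
        exact pow_le_isoRatio hX (by omega)

lemma qNumber_mul_isoRatio_le_of_lt_two_mul (hq : 2 ≤ q) (ht : 0 < t) (htm : t < m)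
    (hmm : m ≤ m') (hm : m < 2 * t) :
    qNumber q (m' - t + 1) * isoRatio q ν m' t ≤
      (1 - gap q t) * (qNumber q (t + 1) * isoRatio q ν m t) := by
  have hq' : (2 : ℚ) ≤ q := by exact_mod_cast hq
  have hsmall : 2 * qNumber q (m - t + 1) ≤ qNumber q (t + 1) :=
    calc 2 * qNumber q (m - t + 1) ≤ q * qNumber q t :=
          mul_le_mul hq' (qNumber_mono q (by omega)) (qNumber_nonneg _ _) (by positivity)
      _ ≤ qNumber q (t + 1) := by linarith [qNumber_succ q t]
  refine (qNumber_mul_isoRatio_anti htm hmm).trans ?_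
  rw [← mul_assoc]
  refine mul_le_mul_of_nonneg_right ?_ (isoRatio_nonneg _ _ _ _)
  linarith [mul_le_mul_of_nonneg_right (gap_le hq ht) (qNumber_nonneg q (t + 1)),
    qNumber_nonneg q (t + 1)]

lemma qNumber_mul_isoRatio_le_of_two_mul_lt (hq : 2 ≤ q) (ht : 0 < t) (hm : 2 * t < m) :
    qNumber q (m - t + 1) * isoRatio q ν m t ≤
      (1 - gap q t) * (qNumber q (t + 1) * isoRatio q ν (2 * t) t) := by
  have hgap : gap q t * qNumber q (t + 1) ^ 2 ≤ (q : ℚ) ^ t := by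
    have hb := qNumber_nonneg q (t + 1)
    nlinarith [mul_le_mul_of_nonneg_right (gap_mul_qNumber_le hq t) hb, qNumber_succ_le hq t]
  have hratio : qNumber q (t + 2) / qNumber q (t + 1) ≤
      (1 - gap q t) * qNumber q (t + 1) / qNumber q t := by
    rw [div_le_div_iff₀ (qNumber_pos (by omega)) (qNumber_pos ht)]
    linarith [qNumber_succ_sq q t]
  refine (qNumber_mul_isoRatio_anti (m := 2 * t + 1) (by omega) hm).trans ?_
  rw [isoRatio, isoRatio, show 2 * t + 1 - t = t + 1 by omega, show 2 * t - t = t by omega]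
  calc qNumber q (t + 1 + 1) * (qNumber q (2 * (ν - t)) / qNumber q (t + 1))
      = qNumber q (t + 2) / qNumber q (t + 1) * qNumber q (2 * (ν - t)) := by ring
    _ ≤ (1 - gap q t) * qNumber q (t + 1) / qNumber q t * qNumber q (2 * (ν - t)) :=
        mul_le_mul_of_nonneg_right hratio (qNumber_nonneg _ _)
    _ = _ := by ring

lemma qNumber_sub_one_mul_isoRatio_add_le (hq : 2 ≤ q) (hY : t + 1 < mY)
    (hν : mY + 2 * t + 3 ≤ 2 * ν) :
    (qNumber q (t + 1) - 1) * isoRatio q ν mY (t + 1) + qNumber q (t + 1) ≤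
      (1 - gap q t) * (qNumber q (t + 1) * isoRatio q ν mY (t + 1)) := by
  have hq' : (2 : ℚ) ≤ q := by exact_mod_cast hq
  have hR : 2 * qNumber q (t + 1) ≤ isoRatio q ν mY (t + 1) :=
    calc 2 * qNumber q (t + 1) ≤ 2 * (2 * (q : ℚ) ^ t) := by
          gcongr
          exact qNumber_succ_le hq t
      _ = (q : ℚ) ^ t * 2 ^ 2 := by ring
      _ ≤ (q : ℚ) ^ t * (q : ℚ) ^ 2 := by gcongr
      _ = (q : ℚ) ^ (t + 2) := (pow_add _ _ _).symm
      _ ≤ isoRatio q ν mY (t + 1) := pow_le_isoRatio hY (by omega)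
  linarith [mul_le_mul_of_nonneg_right (gap_mul_qNumber_le hq t)
    (isoRatio_nonneg q ν mY (t + 1))]

lemma sixteen_mul_qNumber_mul_le (hq : 2 ≤ q) (ht : 1 < t) (hν : 7 * t + 3 ≤ 2 * ν) :
    16 * (qNumber q (t + 1) * qNumber q (2 * t + 1)) ≤
      (qNumber q (t + 1) - 1) * Nprime q (t + 1) (2 * t) ν := by
  have hq' : (2 : ℚ) ≤ q := by exact_mod_cast hq
  have hsub : (q : ℚ) ^ t ≤ qNumber q (t + 1) - 1 := by
    rw [qNumber_add, qNumber_one, mul_one]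
    linarith [one_le_qNumber (q := q) (Nat.zero_lt_of_lt ht)]
  have hN : (q : ℚ) ^ (4 * t + 2) ≤ Nprime q (t + 1) (2 * t) ν := by
    rw [Nprime_eq_isoRatio_mul hq (by omega) (by omega)]
    exact (pow_le_isoRatio (by omega) (by omega)).trans
      (le_mul_of_one_le_right (isoRatio_nonneg _ _ _ _) (one_le_Nprime hq (by omega)))
  calc 16 * (qNumber q (t + 1) * qNumber q (2 * t + 1))
      ≤ 16 * (2 * (q : ℚ) ^ t * (2 * (q : ℚ) ^ (2 * t))) := by
        gcongr
        exacts [qNumber_nonneg _ _, qNumber_succ_le hq _, qNumber_succ_le hq _]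
    _ = (q : ℚ) ^ t * ((q : ℚ) ^ (2 * t) * 2 ^ 6) := by ring
    _ ≤ (q : ℚ) ^ t * ((q : ℚ) ^ (2 * t) * (q : ℚ) ^ 6) := by gcongr
    _ = (q : ℚ) ^ t * (q : ℚ) ^ (2 * t + 6) := by rw [← pow_add _ (2 * t)]
    _ ≤ (q : ℚ) ^ t * (q : ℚ) ^ (4 * t + 2) := by
        gcongr ?_ * ?_
        exact pow_le_pow_right₀ (by linarith) (by omega)
    _ ≤ (qNumber q (t + 1) - 1) * Nprime q (t + 1) (2 * t) ν :=
        mul_le_mul hsub hN (by positivity) ((by positivity : (0 : ℚ) ≤ (q : ℚ) ^ t).trans hsub)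

lemma isoRatio_mul_lt_of_one_lt (hq : 2 ≤ q) (ht : 1 < t) (hY : 2 * t ≤ mY)
    (hν : 2 * mY + 2 * t + t + 3 ≤ 2 * ν) :
    isoRatio q ν mY (t + 1) * (qNumber q (t + 1) * qNumber q (2 * t + 1) +
        (qNumber q (t + 1) - 1) * Nprime q (t + 1) (2 * t) ν) <
      (qNumber q (t + 1) - 1) * Nprime q t (2 * t) ν := by
  have hq' : (2 : ℚ) ≤ q := by exact_mod_cast hq
  have hratio : 4 * isoRatio q ν mY (t + 1) ≤ 3 * isoRatio q ν (2 * t) t := by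
    have hsucc := sq_mul_isoRatio_succ_le (q := q) (m := 2 * t) (a := t) (ν := ν)
      (by omega) (by omega)
    have hanti := isoRatio_anti (q := q) (ν := ν) (m := 2 * t) (a := t + 1) (by omega) hY
    have hR := isoRatio_nonneg q ν (2 * t) t
    refine (mul_le_mul_of_nonneg_left hanti (by norm_num)).trans ?_
    refine le_of_mul_le_mul_left ?_ (by positivity : (0 : ℚ) < (q : ℚ) ^ 2)
    nlinarith [mul_le_mul_of_nonneg_right (by nlinarith : 4 * ((q : ℚ) + 1) ≤ 3 * q ^ 2) hR]
  have hR' : 1 ≤ isoRatio q ν mY (t + 1) := one_le_isoRatio (by omega) (by omega)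
  have hM := sixteen_mul_qNumber_mul_le (ν := ν) hq ht (by omega)
  have hb : 0 < qNumber q (t + 1) * qNumber q (2 * t + 1) :=
    mul_pos (qNumber_pos (by omega)) (qNumber_pos (by omega))
  rw [Nprime_eq_isoRatio_mul (a := t) hq (by omega) (by omega)]
  nlinarith [mul_le_mul_of_nonneg_left hM (zero_le_one.trans hR'),
    mul_le_mul_of_nonneg_right hratio (by linarith :
      0 ≤ (qNumber q (t + 1) - 1) * Nprime q (t + 1) (2 * t) ν)]

lemma isoRatio_two_mul_lt (hq : 2 ≤ q) (hY : 4 ≤ mY) (hν : mY ≤ ν) :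
    isoRatio q ν mY 2 * (qNumber q 2 * qNumber q 3 + (qNumber q 2 - 1)) <
      (qNumber q 2 - 1) * Nprime q 1 2 ν := by
  have hq' : (2 : ℚ) ≤ q := by exact_mod_cast hq
  have htwo : qNumber q 2 = q + 1 := by rw [qNumber_succ, qNumber_one, mul_one]
  have hthree : qNumber q 3 = q ^ 2 + q + 1 := by rw [qNumber_succ, htwo]; ring
  have hratio : (q : ℚ) ^ 2 * (q + 1) * isoRatio q ν mY 2 ≤ isoRatio q ν 2 1 :=
    calc (q : ℚ) ^ 2 * (q + 1) * isoRatio q ν mY 2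
        ≤ (q : ℚ) ^ 2 * (q + 1) * isoRatio q ν 4 2 := by
          gcongr
          exact isoRatio_anti (by norm_num) hY
      _ = (q : ℚ) ^ 2 * qNumber q (2 * (ν - 2)) := by
          rw [isoRatio, htwo]
          field_simp
      _ ≤ qNumber q (2 * (ν - 1)) :=
          (pow_mul_qNumber_le q 2 _).trans_eq (by congr 1; omega)
      _ = isoRatio q ν 2 1 := by rw [isoRatio, qNumber_one, div_one]
  have hpoly : ((q : ℚ) + 1) * (q ^ 2 + q + 1) + q < q * (q ^ 2 * (q + 1)) := by
    nlinarith [mul_nonneg (sq_nonneg (q : ℚ)) (sub_nonneg.2 hq'),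
      mul_nonneg (pow_nonneg (zero_le_two.trans hq') 3) (sub_nonneg.2 hq')]
  have hR : 1 ≤ isoRatio q ν mY 2 := one_le_isoRatio (by omega) hν
  rw [Nprime_eq_isoRatio_mul hq one_lt_two (by omega), Nprime_self q 2, htwo, hthree]
  linarith [mul_lt_mul_of_pos_left hpoly (zero_lt_one.trans_le hR),
    mul_le_mul_of_nonneg_left hratio (zero_le_two.trans hq')]

lemma isoRatio_mul_lt (hq : 2 ≤ q) (ht : 0 < t) (hY : 2 * t ≤ mY) (hY' : t = 1 → 4 ≤ mY)
    (hν : 2 * mY + 2 * t + t + 3 ≤ 2 * ν) :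
    isoRatio q ν mY (t + 1) * (qNumber q (t + 1) * qNumber q (2 * t + 1) +
        (qNumber q (t + 1) - 1) * Nprime q (t + 1) (2 * t) ν) <
      (qNumber q (t + 1) - 1) * Nprime q t (2 * t) ν := by
  rcases (Nat.succ_le_of_lt ht).eq_or_lt with rfl | ht1
  · simpa only [Nat.reduceAdd, Nat.reduceMul, Nprime_self, mul_one]
      using isoRatio_two_mul_lt hq (hY' rfl) (by omega)
  · exact isoRatio_mul_lt_of_one_lt hq ht1 hY hν

end Estimates

/-! ### The extremal product -/

/-- The product of the cardinalities of `C3 f S mY` and `C4 f S mX t` for `S` of dimension `t + 1`,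
see `ncard_C3_mul_ncard_C4`. -/
def extremalProduct (q ν t mY mX : ℕ) : ℚ :=
  Nprime q (t + 1) mY ν *
    (qNumber q (t + 1) * Nprime q t mX ν - (qNumber q (t + 1) - 1) * Nprime q (t + 1) mX ν)

/-- The numerical assumptions of the theorem, in a form symmetric in the two dimensions. -/
structure Admissible (ν t mY mX : ℕ) : Prop where
  pos : 0 < t
  lt_min : t < min mY mX
  min_le : min mY mX ≤ 2 * t
  four_le_max : t = 1 → 4 ≤ max mY mX
  le_two_mul : 2 * max mY mX + min mY mX + t + 3 ≤ 2 * ν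

lemma Admissible.symm {ν t mY mX : ℕ} (hA : Admissible ν t mY mX) : Admissible ν t mX mY := by
  obtain ⟨ht, hlt, hle, hfour, hν⟩ := hA
  exact ⟨ht, by omega, by omega, by omega, by omega⟩

section ExtremalProduct

variable {q ν t mY mX m₁ m₂ i j : ℕ}

lemma extremalProduct_eq (hq : 2 ≤ q) (hX : t < mX) (hXν : mX ≤ ν) :
    extremalProduct q ν t mY mX = Nprime q (t + 1) mY ν * Nprime q (t + 1) mX ν *
      (qNumber q (t + 1) * isoRatio q ν mX t - (qNumber q (t + 1) - 1)) := by
  rw [extremalProduct, Nprime_eq_isoRatio_mul (a := t) hq hX (by omega)]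
  ring

lemma extremalProduct_pos (hq : 2 ≤ q) (hX : t < mX) (hYν : mY ≤ ν) (hXν : mX ≤ ν) :
    0 < extremalProduct q ν t mY mX := by
  rw [extremalProduct_eq hq hX hXν]
  refine mul_pos (mul_pos (Nprime_pos hq hYν) (Nprime_pos hq hXν)) ?_
  linarith [le_mul_of_one_le_right (qNumber_nonneg q (t + 1))
    (one_le_isoRatio (q := q) hX hXν)]

lemma extremalProduct_lt_swap (hq : 2 ≤ q) (ht : t < m₂) (hm : m₂ < m₁) (hν : m₁ ≤ ν) :
    extremalProduct q ν t m₂ m₁ < extremalProduct q ν t m₁ m₂ := by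
  rw [extremalProduct_eq hq (by omega) hν, extremalProduct_eq hq ht (by omega),
    mul_comm (Nprime q (t + 1) m₂ ν)]
  have hN : 0 < Nprime q (t + 1) m₁ ν * Nprime q (t + 1) m₂ ν :=
    mul_pos (Nprime_pos hq hν) (Nprime_pos hq (by omega))
  have hratio := isoRatio_strictAnti (q := q) (ν := ν) hq ht hm (by omega)
  have hlead := mul_lt_mul_of_pos_left hratio (qNumber_pos (q := q) t.succ_pos)
  exact mul_lt_mul_of_pos_left (by linarith) hN

lemma Admissible.two_mul_qNumber_mul_le_isoRatio_min (hA : Admissible ν t mY mX) (hq : 2 ≤ q) :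
    2 * (qNumber q (t + 1) * (qNumber q (mY - t + 1) * qNumber q (mX - t + 1))) ≤
      isoRatio q ν (min mY mX) t := by
  obtain ⟨ht, hlt, -, -, hν⟩ := hA
  rcases le_total mY mX with hle | hle
  · rw [min_eq_left hle, mul_comm (qNumber q (mY - t + 1))]
    exact two_mul_qNumber_mul_le_isoRatio hq ht hle (by omega) (by omega)
  · rw [min_eq_right hle]
    exact two_mul_qNumber_mul_le_isoRatio hq ht hle (by omega) (by omega)

lemma lt_extremalProduct_of_le (hq : 2 ≤ q) (hA : Admissible ν t mY mX) {P : ℚ}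
    (hP : P ≤ (1 - gap q t ^ 2) * (qNumber q (t + 1) * isoRatio q ν (min mY mX) t *
      (Nprime q (t + 1) mY ν * Nprime q (t + 1) mX ν))) :
    P < extremalProduct q ν t (max mY mX) (min mY mX) := by
  obtain ⟨-, hlt, -, -, hν⟩ := hA
  have hN : Nprime q (t + 1) (max mY mX) ν * Nprime q (t + 1) (min mY mX) ν =
      Nprime q (t + 1) mY ν * Nprime q (t + 1) mX ν := by
    rcases le_total mY mX with h | h
    · rw [max_eq_right h, min_eq_left h, mul_comm]
    · rw [max_eq_left h, min_eq_right h]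
  have hNpos : 0 < Nprime q (t + 1) mY ν * Nprime q (t + 1) mX ν :=
    mul_pos (Nprime_pos hq (by omega)) (Nprime_pos hq (by omega))
  have hb := qNumber_pos (q := q) t.succ_pos
  have hgap := mul_lt_mul_of_pos_left
    (one_lt_gap_sq_mul_isoRatio (ν := ν) hq hlt (by omega)) (mul_pos hb hNpos)
  rw [extremalProduct_eq hq hlt (by omega), hN]
  linarith

lemma mul_lt_extremalProduct (hq : 2 ≤ q) (hA : Admissible ν t mY mX) {x y y₀ : ℚ}
    (hx₀ : 0 ≤ x) (hx : x ≤ (1 + gap q t) * Nprime q t mX ν) (hy : y ≤ y₀) (hy₀ : 0 ≤ y₀)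
    (hlead : y₀ * isoRatio q ν mX t ≤
      (1 - gap q t) * (qNumber q (t + 1) * isoRatio q ν (min mY mX) t) * Nprime q (t + 1) mY ν) :
    y * x < extremalProduct q ν t (max mY mX) (min mY mX) := by
  have hbounds : t < mX ∧ mX ≤ ν := by
    have := hA.lt_min
    have := hA.le_two_mul
    omega
  have hgap := gap_nonneg q t
  have hN : 0 < Nprime q (t + 1) mX ν := Nprime_pos hq hbounds.2
  rw [Nprime_eq_isoRatio_mul hq hbounds.1 (by omega)] at hx
  refine lt_extremalProduct_of_le hq hA ?_
  calc y * x ≤ y₀ * ((1 + gap q t) * (isoRatio q ν mX t * Nprime q (t + 1) mX ν)) :=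
        mul_le_mul hy hx hx₀ hy₀
    _ = y₀ * isoRatio q ν mX t * ((1 + gap q t) * Nprime q (t + 1) mX ν) := by ring
    _ ≤ _ := mul_le_mul_of_nonneg_right hlead (by positivity)
    _ = _ := by ring

lemma qNumber_mul_isoRatio_le_of_admissible (hq : 2 ≤ q) (hA : Admissible ν t mY mX)
    (hne : min mY mX < 2 * t ∨ mX ≠ 2 * t) :
    qNumber q (mX - t + 1) * isoRatio q ν mX t ≤
      (1 - gap q t) * (qNumber q (t + 1) * isoRatio q ν (min mY mX) t) := by
  obtain ⟨ht, hlt, hle, -, -⟩ := hA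
  rcases hle.lt_or_eq with hmin | hmin
  · exact qNumber_mul_isoRatio_le_of_lt_two_mul hq ht hlt (min_le_right _ _) hmin
  · rw [hmin]
    exact qNumber_mul_isoRatio_le_of_two_mul_lt hq ht (by omega)

lemma coverBound_mul_lt_extremalProduct_of_two_le (hq : 2 ≤ q) (hA : Admissible ν t mY mX)
    (hi₂ : 2 ≤ i) (hi : t + i ≤ mY) :
    coverBound q t i * (qNumber q (mX - t + 1) ^ i * Nprime q (t + i) mY ν) * Nprime q t mX ν <
      extremalProduct q ν t (max mY mX) (min mY mX) := by
  refine lt_extremalProduct_of_le hq hA ?_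
  obtain ⟨ht, hlt, -, -, hν⟩ := hA
  have hbound := coverBound_mul_Nprime_le_of_two_le hq ht (mX := mX) (ν := ν) (by omega)
    (by omega) (by omega) hi₂ hi
  have hgap : (7 : ℚ) / 8 ≤ 1 - gap q t ^ 2 := by nlinarith [gap_le hq ht, gap_nonneg q t]
  have hb := qNumber_nonneg q (t + 1)
  have hNY : 0 < Nprime q (t + 1) mY ν := Nprime_pos hq (by omega)
  have hNX : 0 < Nprime q (t + 1) mX ν := Nprime_pos hq (by omega)
  have hR : 0 ≤ isoRatio q ν mX t := isoRatio_nonneg q ν mX t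
  have hRmin : isoRatio q ν mX t ≤ isoRatio q ν (min mY mX) t :=
    isoRatio_anti hlt (min_le_right _ _)
  rw [Nprime_eq_isoRatio_mul hq (by omega : t < mX) (by omega)]
  calc _ ≤ 7 / 8 * (qNumber q (t + 1) * Nprime q (t + 1) mY ν) *
        (isoRatio q ν mX t * Nprime q (t + 1) mX ν) :=
        mul_le_mul_of_nonneg_right (by linarith) (mul_nonneg hR hNX.le)
    _ = 7 / 8 * (qNumber q (t + 1) * isoRatio q ν mX t *
          (Nprime q (t + 1) mY ν * Nprime q (t + 1) mX ν)) := by ring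
    _ ≤ _ := by gcongr

lemma coverBound_mul_coverBound_lt_extremalProduct (hq : 2 ≤ q) (hA : Admissible ν t mY mX)
    (hi₀ : 0 < i) (hj₀ : 0 < j) (hi : t + i ≤ mY) (hj : t + j ≤ mX) :
    coverBound q t i * (qNumber q (mX - t + 1) ^ i * Nprime q (t + i) mY ν) *
        (coverBound q t j * (qNumber q (mY - t + 1) ^ j * Nprime q (t + j) mX ν)) <
      extremalProduct q ν t (max mY mX) (min mY mX) := by
  refine lt_extremalProduct_of_le hq hA ?_
  have hratio := hA.two_mul_qNumber_mul_le_isoRatio_min hq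
  obtain ⟨ht, hlt, -, -, hν⟩ := hA
  have hYle := coverBound_mul_Nprime_le hq ht (mX := mX) (ν := ν) (by omega) (by omega) (by omega)
    hi₀ hi
  have hXle := coverBound_mul_Nprime_le hq ht (mX := mY) (ν := ν) (by omega) (by omega) (by omega)
    hj₀ hj
  have hgap : (1 : ℚ) / 2 ≤ 1 - gap q t ^ 2 := by nlinarith [gap_le hq ht, gap_nonneg q t]
  have hb := qNumber_nonneg q (t + 1)
  have hbY := qNumber_nonneg q (mY - t + 1)
  have hbX := qNumber_nonneg q (mX - t + 1)
  have hNX₀ : 0 < Nprime q (t + j) mX ν := Nprime_pos hq (by omega)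
  have hNY : 0 < Nprime q (t + 1) mY ν := Nprime_pos hq (by omega)
  have hNX : 0 < Nprime q (t + 1) mX ν := Nprime_pos hq (by omega)
  calc _ ≤ qNumber q (t + 1) * (qNumber q (mX - t + 1) * Nprime q (t + 1) mY ν) *
        (qNumber q (t + 1) * (qNumber q (mY - t + 1) * Nprime q (t + 1) mX ν)) :=
        mul_le_mul hYle hXle (mul_nonneg (coverBound_nonneg _ _ _) (mul_nonneg
          (pow_nonneg (qNumber_nonneg _ _) _) hNX₀.le)) (by positivity)
    _ = 1 / 2 * (qNumber q (t + 1) *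
          (2 * (qNumber q (t + 1) * (qNumber q (mY - t + 1) * qNumber q (mX - t + 1)))) *
          (Nprime q (t + 1) mY ν * Nprime q (t + 1) mX ν)) := by ring
    _ ≤ _ := by gcongr

end ExtremalProduct

lemma crossIntersecting_C3_C4 [FiniteDimensional K V] {f : V →ₗ[K] V →ₗ[K] K} {t m₁ m₂ : ℕ}
    {S : Submodule K V} :
    CrossIntersecting f t m₁ m₂ (C3 f S m₁) (C4 f S m₂ t) :=
  ⟨fun _ hF ↦ hF.1, fun _ hG ↦ hG.1, fun _ hF _ hG ↦
    hG.2.trans (Submodule.finrank_mono (le_inf (inf_le_right.trans hF.2) inf_le_left))⟩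

section Extremal

variable [Finite K] [Finite V] {f : V →ₗ[K] V →ₗ[K] K} {ν t m m₁ m₂ : ℕ} {S : Submodule K V}

lemma ncard_C3_mul_ncard_C4 (hf : IsSymplectic f ν) (hS : S ∈ polar f (t + 1)) (h₁ : t + 1 ≤ m₁)
    (h₂ : t + 1 ≤ m₂) :
    ((C3 f S m₁).ncard * (C4 f S m₂ t).ncard : ℚ) = extremalProduct (Nat.card K) ν t m₁ m₂ := by
  rw [ncard_C3 hf hS.1 (hS.2.trans_le h₁), ncard_C4 hf hS h₂, hS.2, extremalProduct]

lemma eq_C3_and_eq_C4_of_extremalProduct_le (hf : IsSymplectic f ν) (hS : S ∈ polar f (t + 1))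
    (h₁ : t + 1 ≤ m₁) (h₂ : t + 1 ≤ m₂) (hν₁ : m₁ ≤ ν) (hν₂ : m₂ ≤ ν) {Y X : Set (Submodule K V)}
    (hY : Y ⊆ C3 f S m₁) (hX : X ⊆ C4 f S m₂ t)
    (hle : extremalProduct (Nat.card K) ν t m₁ m₂ ≤ Y.ncard * X.ncard) :
    Y = C3 f S m₁ ∧ X = C4 f S m₂ t := by
  have hpos := extremalProduct_pos (t := t) (two_le_natCard K) h₂ hν₁ hν₂
  rw [← ncard_C3_mul_ncard_C4 hf hS h₁ h₂] at hpos hle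
  norm_cast at hpos hle
  have hYle := Set.ncard_le_ncard hY
  have hXle := Set.ncard_le_ncard hX
  have hY' : (C3 f S m₁).ncard ≤ Y.ncard :=
    Nat.le_of_mul_le_mul_right (hle.trans (Nat.mul_le_mul_left _ hXle))
      (Nat.pos_of_mul_pos_left hpos)
  have hX' : (C4 f S m₂ t).ncard ≤ X.ncard :=
    Nat.le_of_mul_le_mul_left (hle.trans (Nat.mul_le_mul_right _ hYle))
      (Nat.pos_of_mul_pos_right hpos)
  exact ⟨Set.eq_of_subset_of_ncard_le hY hY', Set.eq_of_subset_of_ncard_le hX hX'⟩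

lemma le_of_forall_mem_C3_le (hf : IsSymplectic f ν) {H T : Submodule K V}
    (hH : TotallyIsotropic f H) (hHm : finrank K H < m) (hmν : m ≤ ν)
    (hT : ∀ F ∈ C3 f H m, T ≤ F) : T ≤ H := by
  by_contra hTH
  have hlt : finrank K H < finrank K ↥(H ⊔ T) :=
    Submodule.finrank_lt_finrank_of_lt (left_lt_sup.2 hTH)
  obtain ⟨U, -, hUT, hU⟩ := exists_le_le_finrank_eq (n := finrank K H + 1) le_sup_left
    (Nat.le_succ _) hlt
  have hq := two_le_natCard K
  have hsub : C3 f H m ⊆ above (polar f m) U := fun F hF ↦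
    ⟨hF.1, hUT.trans (sup_le hF.2 (hT F hF))⟩
  have hcard : ((C3 f H m).ncard : ℚ) ≤ (above (polar f m) U).ncard := by
    exact_mod_cast Set.ncard_le_ncard hsub
  have hUle := ncard_above_le hf (subset_refl (polar f m)) hmν (hU.trans_le hHm)
  have hratio : (Nat.card K : ℚ) ^ 1 ≤ isoRatio (Nat.card K) ν m (finrank K H) :=
    pow_le_isoRatio hHm (by omega)
  have hq' : (2 : ℚ) ≤ Nat.card K := by exact_mod_cast hq
  rw [ncard_C3 hf hH hHm.le, Nprime_eq_isoRatio_mul hq hHm (by omega)] at hcard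
  rw [hU] at hUle
  nlinarith [Nprime_pos (a := finrank K H + 1) hq hmν]

lemma not_forall_mem_C4_le (hf : IsSymplectic f ν) (hS : S ∈ polar f (t + 1)) (ht : 0 < t)
    (htm : t < m) (hmν : m ≤ ν) {T : Submodule K V} (hT : finrank K T = t) :
    ¬∀ F ∈ C4 f S m t, T ≤ F := by
  intro hT4
  have hall : ∀ H ∈ between ⊥ S t, H = T := fun H hH ↦ by
    obtain ⟨-, hHS, hHt⟩ := mem_between.1 hH
    refine (Submodule.eq_of_le_of_finrank_eq ?_ (hT.trans hHt.symm)).symm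
    refine le_of_forall_mem_C3_le hf (hS.1.mono hHS) (hHt.trans_lt htm) hmν fun F hF ↦ ?_
    exact hT4 F ⟨hF.1, hHt.ge.trans (Submodule.finrank_mono (le_inf hF.2 hHS))⟩
  have hcard : (#(between ⊥ S t) : ℚ) ≤ 1 := by
    exact_mod_cast card_le_one.2 fun A hA B hB ↦ (hall A hA).trans (hall B hB).symm
  rw [card_between_bot_hyperplanes hS.2, ← qNumber_one (Nat.card K)] at hcard
  exact hcard.not_gt (qNumber_strictMono (two_le_natCard K) (by omega))

end Extremal

/-! ### Comparing an arbitrary pair with the extremal one -/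

/-- A pair of families is trivial if some `t`-dimensional totally isotropic subspace is contained in
every member of both of them. -/
def IsTrivialPair (f : V →ₗ[K] V →ₗ[K] K) (t : ℕ) (Y X : Set (Submodule K V)) : Prop :=
  ∃ T ∈ polar f t, (∀ F ∈ Y, T ≤ F) ∧ ∀ F ∈ X, T ≤ F

namespace CrossIntersecting

variable [Finite K] [Finite V] {f : V →ₗ[K] V →ₗ[K] K} {ν t mY mX i j : ℕ}
  {Y X : Set (Submodule K V)} {S T W Z : Submodule K V}

lemma ncard_mul_ncard_le (h : CrossIntersecting f t mY mX Y X) (hf : IsSymplectic f ν)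
    (hYν : mY ≤ ν) (hXν : mX ≤ ν) (hi : t + i ≤ mY) (hj : t + j ≤ mX)
    (hτX : t + i ≤ tauCover f t X) (hτY : t + j ≤ tauCover f t Y) (hZ : IsTCover f t X Z)
    (hZi : finrank K Z = t + i) (hW : IsTCover f t Y W) (hWj : finrank K W = t + j) :
    (Y.ncard * X.ncard : ℚ) ≤
      coverBound (Nat.card K) t i *
          (qNumber (Nat.card K) (mX - t + 1) ^ i * Nprime (Nat.card K) (t + i) mY ν) *
        (coverBound (Nat.card K) t j *
          (qNumber (Nat.card K) (mY - t + 1) ^ j * Nprime (Nat.card K) (t + j) mX ν)) := by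
  have hYle := h.ncard_le_of_le_tauCover hf hYν (by omega) hi hτX hW hWj
  have hXle := h.symm.ncard_le_of_le_tauCover hf hXν (by omega) hj hτY hZ hZi
  refine (mul_le_mul hYle hXle (Nat.cast_nonneg _) ((Nat.cast_nonneg _).trans hYle)).trans_eq ?_
  ring

lemma ncard_mul_ncard_lt_of_pos (h : CrossIntersecting f t mY mX Y X) (hf : IsSymplectic f ν)
    (hA : Admissible ν t mY mX) (hi₀ : 0 < i) (hj₀ : 0 < j) (hi : t + i ≤ mY) (hj : t + j ≤ mX)
    (hτX : t + i ≤ tauCover f t X) (hτY : t + j ≤ tauCover f t Y) (hZ : IsTCover f t X Z)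
    (hZi : finrank K Z = t + i) (hW : IsTCover f t Y W) (hWj : finrank K W = t + j) :
    (Y.ncard * X.ncard : ℚ) < extremalProduct (Nat.card K) ν t (max mY mX) (min mY mX) := by
  have hν := hA.le_two_mul
  exact (h.ncard_mul_ncard_le hf (by omega) (by omega) hi hj hτX hτY hZ hZi hW hWj).trans_lt
    (coverBound_mul_coverBound_lt_extremalProduct (two_le_natCard K) hA hi₀ hj₀ hi hj)

lemma ncard_mul_ncard_lt_of_two_le (h : CrossIntersecting f t mY mX Y X) (hf : IsSymplectic f ν)
    (hA : Admissible ν t mY mX) (hi₂ : 2 ≤ i) (hi : t + i ≤ mY) (hτX : t + i ≤ tauCover f t X)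
    (hτY : t ≤ tauCover f t Y) (hZ : IsTCover f t X Z) (hZi : finrank K Z = t + i)
    (hT : IsTCover f t Y T) (hTt : finrank K T = t) :
    (Y.ncard * X.ncard : ℚ) < extremalProduct (Nat.card K) ν t (max mY mX) (min mY mX) := by
  have hν := hA.le_two_mul
  have hlt := hA.lt_min
  refine lt_of_le_of_lt ?_
    (coverBound_mul_lt_extremalProduct_of_two_le (two_le_natCard K) hA hi₂ hi)
  have hprod := h.ncard_mul_ncard_le (j := 0) hf (by omega) (by omega) hi (by omega) hτX hτY hZ hZi
    hT hTt
  rwa [coverBound_zero, pow_zero, one_mul, one_mul, add_zero] at hprod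

lemma ncard_le_of_forall_le (h : CrossIntersecting f t mY mX Y X) (hf : IsSymplectic f ν)
    (hXν : mX ≤ ν) (htX : t ≤ mX) (hT : finrank K T = t) (hTX : ∀ G ∈ X, T ≤ G) :
    (X.ncard : ℚ) ≤ Nprime (Nat.card K) t mX ν := by
  have hle := _root_.ncard_above_le hf h.subset_right hXν (hT.trans_le htX)
  rwa [show above X T = X from Set.sep_eq_self_iff_mem_true.2 hTX, hT] at hle

lemma ncard_right_le_or_exists (h : CrossIntersecting f t mY mX Y X) (hf : IsSymplectic f ν)
    (htY : t < mY) (htX : t < mX) (hXν : mX ≤ ν) (hν : 2 * mY + mX + t + 3 ≤ 2 * ν)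
    (hZ : IsTCover f t X Z) (hZi : finrank K Z = t + i) (hi : i ≤ 1) :
    (X.ncard : ℚ) ≤ (1 + gap (Nat.card K) t) * Nprime (Nat.card K) t mX ν ∨
      ∃ S ∈ polar f (t + 1), (∀ F ∈ Y, S ≤ F) ∧ IsTCover f t X S := by
  have hq := two_le_natCard K
  have hN : 0 < Nprime (Nat.card K) (t + 1) mX ν := Nprime_pos hq hXν
  rcases Nat.le_one_iff_eq_zero_or_eq_one.1 hi with rfl | rfl
  · have hle := h.ncard_le_of_forall_le hf hXν htX.le hZi (hZ.le_of_finrank_eq hZi)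
    have hNt : 0 < Nprime (Nat.card K) t mX ν := Nprime_pos hq hXν
    exact .inl (hle.trans (le_mul_of_one_le_left hNt.le (by linarith [gap_nonneg (Nat.card K) t])))
  · by_cases hZY : ∀ F ∈ Y, Z ≤ F
    · exact .inr ⟨Z, ⟨hZ.1, hZi⟩, hZY, hZ⟩
    left
    have hle := h.ncard_right_le_of_isTCover hf hXν htY.le htX hZ hZi hZY
    have herr := mul_le_mul_of_nonneg_right (qNumber_mul_le_gap_mul_isoRatio hq htY htX hν) hN.le
    rw [Nprime_eq_isoRatio_mul hq htX (by omega)] at hle ⊢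
    linarith

lemma ncard_mul_ncard_lt_of_two_mul (h : CrossIntersecting f t mY (2 * t) Y X)
    (hf : IsSymplectic f ν) (hA : Admissible ν t mY (2 * t)) (hY : 2 * t ≤ mY)
    (hT : T ∈ polar f t) (hTY : ∀ F ∈ Y, T ≤ F) (hTX : ¬∀ G ∈ X, T ≤ G)
    (hX : (X.ncard : ℚ) ≤ (1 + gap (Nat.card K) t) * Nprime (Nat.card K) t (2 * t) ν) :
    (Y.ncard * X.ncard : ℚ) <
      extremalProduct (Nat.card K) ν t (max mY (2 * t)) (min mY (2 * t)) := by
  have hq := two_le_natCard K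
  obtain ⟨ht, -, -, hfour, hν⟩ := id hA
  have htY : t + 2 ≤ mY := by omega
  have hcases := h.ncard_le_or_of_two_mul hf (by omega) (by omega) htY hT hTY hTX
  set q := Nat.card K
  have hN₂ : 0 < Nprime q (t + 2) mY ν := Nprime_pos hq (by omega)
  have hN₁ : Nprime q (t + 1) mY ν = isoRatio q ν mY (t + 1) * Nprime q (t + 2) mY ν :=
    Nprime_eq_isoRatio_mul hq (by omega) (by omega)
  have hb := one_le_qNumber_succ q t
  rcases hcases with hYle | ⟨hYle, hXle⟩
  · refine mul_lt_extremalProduct hq hA (Nat.cast_nonneg _) hX hYle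
      ((Nat.cast_nonneg _).trans hYle) ?_
    rw [min_eq_right hY, hN₁]
    have hlead := mul_le_mul_of_nonneg_right
      (qNumber_sub_one_mul_isoRatio_add_le (ν := ν) hq htY (by omega))
      (mul_nonneg hN₂.le (isoRatio_nonneg q ν (2 * t) t))
    linarith
  · rw [max_eq_left hY, min_eq_right hY, extremalProduct, hN₁]
    rw [hN₁] at hYle
    have hprod := mul_le_mul hYle hXle (Nat.cast_nonneg _) ((Nat.cast_nonneg _).trans hYle)
    have hstrict := mul_lt_mul_of_pos_right
      (isoRatio_mul_lt (ν := ν) hq ht hY (by omega) (by omega)) hN₂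
    have hslack : 0 ≤ (qNumber q (t + 1) - 1) * Nprime q (t + 2) mY ν * qNumber q (2 * t + 1) :=
      mul_nonneg (mul_nonneg (by linarith) hN₂.le) (qNumber_nonneg _ _)
    linarith

lemma ncard_mul_ncard_lt_of_le_one_add_gap (h : CrossIntersecting f t mY mX Y X)
    (hf : IsSymplectic f ν) (hA : Admissible ν t mY mX) (hT : T ∈ polar f t)
    (hTY : ∀ F ∈ Y, T ≤ F) (hTX : ¬∀ G ∈ X, T ≤ G)
    (hX : (X.ncard : ℚ) ≤ (1 + gap (Nat.card K) t) * Nprime (Nat.card K) t mX ν) :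
    (Y.ncard * X.ncard : ℚ) < extremalProduct (Nat.card K) ν t (max mY mX) (min mY mX) := by
  have hq := two_le_natCard K
  have hν := hA.le_two_mul
  have hlt := hA.lt_min
  by_cases hne : min mY mX < 2 * t ∨ mX ≠ 2 * t
  · have hYle := h.ncard_above_le_of_not_forall_le hf (by omega) (by omega) (by omega) hT.2 hTX
    rw [show above Y T = Y from Set.sep_eq_self_iff_mem_true.2 hTY] at hYle
    refine mul_lt_extremalProduct hq hA (Nat.cast_nonneg _) hX hYle
      ((Nat.cast_nonneg _).trans hYle) ?_
    have hN : 0 < Nprime (Nat.card K) (t + 1) mY ν := Nprime_pos hq (by omega)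
    linarith [mul_le_mul_of_nonneg_right (qNumber_mul_isoRatio_le_of_admissible hq hA hne) hN.le]
  · have hmX : mX = 2 * t := by omega
    subst hmX
    exact h.ncard_mul_ncard_lt_of_two_mul hf hA (by omega) hT hTY hTX hX

lemma ncard_mul_ncard_lt_or_exists_of_forall_le (h : CrossIntersecting f t mY mX Y X)
    (hf : IsSymplectic f ν) (hA : Admissible ν t mY mX) (hY : Y.Nonempty) (hX : X.Nonempty)
    (hT : T ∈ polar f t) (hTY : ∀ F ∈ Y, T ≤ F) (hTX : ¬∀ G ∈ X, T ≤ G) :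
    (Y.ncard * X.ncard : ℚ) < extremalProduct (Nat.card K) ν t (max mY mX) (min mY mX) ∨
      ∃ S ∈ polar f (t + 1), (∀ F ∈ Y, S ≤ F) ∧ IsTCover f t X S := by
  have hν := hA.le_two_mul
  have hlt := hA.lt_min
  obtain ⟨i, Z, hi, hZ, hZi, hτX⟩ := h.exists_minimal_isTCover hY hX
  obtain ⟨j, -, -, -, -, hτY⟩ := h.symm.exists_minimal_isTCover hX hY
  rcases le_or_gt i 1 with hi₁ | hi₂
  · refine (h.ncard_right_le_or_exists hf (by omega) (by omega) (by omega) (by omega) hZ hZi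
      hi₁).imp_left ?_
    exact h.ncard_mul_ncard_lt_of_le_one_add_gap hf hA hT hTY hTX
  · have hTcover : IsTCover f t Y T :=
      ⟨hT.1, fun F hF ↦ by rw [inf_eq_left.2 (hTY F hF), hT.2]⟩
    exact .inl (h.ncard_mul_ncard_lt_of_two_le hf hA hi₂ hi hτX.ge (by omega) hZ hZi hTcover hT.2)

theorem ncard_mul_ncard_lt_or_exists (h : CrossIntersecting f t mY mX Y X)
    (hf : IsSymplectic f ν) (hA : Admissible ν t mY mX) (hY : Y.Nonempty) (hX : X.Nonempty)
    (hnt : ¬IsTrivialPair f t Y X) :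
    (Y.ncard * X.ncard : ℚ) < extremalProduct (Nat.card K) ν t (max mY mX) (min mY mX) ∨
      (∃ S ∈ polar f (t + 1), (∀ F ∈ Y, S ≤ F) ∧ IsTCover f t X S) ∨
      ∃ S ∈ polar f (t + 1), (∀ G ∈ X, S ≤ G) ∧ IsTCover f t Y S := by
  obtain ⟨i, Z, hi, hZ, hZi, hτX⟩ := h.exists_minimal_isTCover hY hX
  obtain ⟨j, W, hj, hW, hWj, hτY⟩ := h.symm.exists_minimal_isTCover hX hY
  rcases j.eq_zero_or_pos with rfl | hj₀
  · have hWY := hW.le_of_finrank_eq hWj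
    have hWX : ¬∀ G ∈ X, W ≤ G := fun hWX ↦ hnt ⟨W, ⟨hW.1, hWj⟩, hWY, hWX⟩
    exact (h.ncard_mul_ncard_lt_or_exists_of_forall_le hf hA hY hX ⟨hW.1, hWj⟩ hWY hWX).imp_right
      .inl
  rcases i.eq_zero_or_pos with rfl | hi₀
  · have hZX := hZ.le_of_finrank_eq hZi
    have hZY : ¬∀ F ∈ Y, Z ≤ F := fun hZY ↦ hnt ⟨Z, ⟨hZ.1, hZi⟩, hZY, hZX⟩
    rw [mul_comm, max_comm, min_comm]
    exact (h.symm.ncard_mul_ncard_lt_or_exists_of_forall_le hf hA.symm hX hY ⟨hZ.1, hZi⟩ hZX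
      hZY).imp_right .inr
  · exact .inl (h.ncard_mul_ncard_lt_of_pos hf hA hi₀ hj₀ hi hj hτX.ge hτY.ge hZ hZi hW hWj)

end CrossIntersecting

/-! ### Maximal pairs -/

lemma CrossIntersecting.subset_C3_C4 {f : V →ₗ[K] V →ₗ[K] K} {t m₁ m₂ : ℕ}
    {S : Submodule K V} {Y X : Set (Submodule K V)} (h : CrossIntersecting f t m₁ m₂ Y X)
    (hSY : ∀ F ∈ Y, S ≤ F) (hSX : IsTCover f t X S) :
    Y ⊆ C3 f S m₁ ∧ X ⊆ C4 f S m₂ t :=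
  ⟨fun F hF ↦ ⟨h.subset_left hF, hSY F hF⟩,
    fun G hG ↦ ⟨h.subset_right hG, (hSX.2 G hG).trans_eq (by rw [inf_comm])⟩⟩

section Maximal

variable [Finite K] [Finite V] {f : V →ₗ[K] V →ₗ[K] K} {ν t m m₁ m₂ : ℕ} {S : Submodule K V}

lemma polar_nonempty (hf : IsSymplectic f ν) (hm : m ≤ ν) : (polar f m).Nonempty := by
  have hcard := ncard_C3 hf (totallyIsotropic_bot f) ((finrank_bot K V).trans_le m.zero_le)
  have hpos : 0 < Nprime (Nat.card K) (finrank K (⊥ : Submodule K V)) m ν :=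
    Nprime_pos (two_le_natCard K) hm
  rw [← hcard] at hpos
  exact (Set.nonempty_of_ncard_ne_zero (Nat.cast_pos.1 hpos).ne').mono fun _ hF ↦ hF.1

lemma not_isTrivialPair_C3_C4 (hf : IsSymplectic f ν) (hS : S ∈ polar f (t + 1)) (ht : 0 < t)
    (htm : t < m₂) (hmν : m₂ ≤ ν) : ¬IsTrivialPair f t (C3 f S m₁) (C4 f S m₂ t) :=
  fun ⟨_, hT, _, hT4⟩ ↦ not_forall_mem_C4_le hf hS ht htm hmν hT.2 hT4

theorem CrossIntersecting.eq_C3_C4_or_of_extremalProduct_le {Y X : Set (Submodule K V)}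
    (h : CrossIntersecting f t m₁ m₂ Y X) (hf : IsSymplectic f ν) (hA : Admissible ν t m₁ m₂)
    (hm : m₂ ≤ m₁) (hnt : ¬IsTrivialPair f t Y X)
    (hle : extremalProduct (Nat.card K) ν t m₁ m₂ ≤ Y.ncard * X.ncard) :
    ∃ S ∈ polar f (t + 1), (Y = C3 f S m₁ ∧ X = C4 f S m₂ t) ∨
      (m₁ = m₂ ∧ Y = C4 f S m₁ t ∧ X = C3 f S m₂) := by
  have hq := two_le_natCard K
  have hlt := hA.lt_min
  have hν := hA.le_two_mul
  have hpos := (extremalProduct_pos (t := t) hq (by omega : t < m₂) (by omega) (by omega)).trans_le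
    hle
  have hY : Y.Nonempty := Set.nonempty_of_ncard_ne_zero fun h₀ ↦ by simp [h₀] at hpos
  have hX : X.Nonempty := Set.nonempty_of_ncard_ne_zero fun h₀ ↦ by simp [h₀] at hpos
  have hdich := h.ncard_mul_ncard_lt_or_exists hf hA hY hX hnt
  rw [max_eq_left hm, min_eq_right hm] at hdich
  rcases hdich with hprod | ⟨S, hS, hSY, hSX⟩ | ⟨S, hS, hSX, hSY⟩
  · exact absurd hprod hle.not_gt
  · obtain ⟨hYC, hXC⟩ := h.subset_C3_C4 hSY hSX
    exact ⟨S, hS, .inl (eq_C3_and_eq_C4_of_extremalProduct_le hf hS (by omega) (by omega) (by omega)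
      (by omega) hYC hXC hle)⟩
  · obtain ⟨hXC, hYC⟩ := h.symm.subset_C3_C4 hSX hSY
    have hle' : extremalProduct (Nat.card K) ν t m₂ m₁ ≤ X.ncard * Y.ncard := by
      rw [mul_comm (X.ncard : ℚ)]
      rcases hm.eq_or_lt with rfl | hlt'
      · exact hle
      · exact (extremalProduct_lt_swap hq (by omega) hlt' (by omega)).le.trans hle
    obtain ⟨hXeq, hYeq⟩ := eq_C3_and_eq_C4_of_extremalProduct_le hf hS (by omega) (by omega)
      (by omega) (by omega) hXC hYC hle'
    refine ⟨S, hS, .inr ⟨le_antisymm ?_ hm, hYeq, hXeq⟩⟩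
    by_contra! hlt'
    have heq := ncard_C3_mul_ncard_C4 hf hS (by omega : t + 1 ≤ m₂) (by omega : t + 1 ≤ m₁)
    rw [← hXeq, ← hYeq, mul_comm] at heq
    exact (extremalProduct_lt_swap hq (by omega) hlt' (by omega)).not_ge (hle.trans_eq heq)

end Maximal

theorem stmt_4_general [Finite K] {f : V →ₗ[K] V →ₗ[K] K} {ν t m₁ m₂ : ℕ} (hf : IsSymplectic f ν)
    (ht : 0 < t) (hm : m₂ ≤ m₁) (hmt : t + 1 ≤ m₂) (hdim : 2 * m₁ + m₂ + t + 3 ≤ 2 * ν)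
    (hcase : m₂ ≤ 2 * t ∧ (m₁, m₂, t) ≠ (2, 2, 1) ∧ (m₁, m₂, t) ≠ (3, 2, 1))
    {ℱ₁ ℱ₂ : Set (Submodule K V)} (h : CrossIntersecting f t m₁ m₂ ℱ₁ ℱ₂)
    (hnt : ¬IsTrivialPair f t ℱ₁ ℱ₂)
    (hmax : ∀ 𝒢₁ 𝒢₂ : Set (Submodule K V), CrossIntersecting f t m₁ m₂ 𝒢₁ 𝒢₂ →
      ¬IsTrivialPair f t 𝒢₁ 𝒢₂ → 𝒢₁.ncard * 𝒢₂.ncard ≤ ℱ₁.ncard * ℱ₂.ncard) :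
    ∃ S ∈ polar f (t + 1), (ℱ₁ = C3 f S m₁ ∧ ℱ₂ = C4 f S m₂ t) ∨
      (m₁ = m₂ ∧ ℱ₁ = C4 f S m₁ t ∧ ℱ₂ = C3 f S m₂) := by
  have hfin : FiniteDimensional K V := Module.finite_of_finrank_pos (by rw [hf.finrank_eq]; omega)
  have hV : Finite V := Module.finite_of_finite K
  have hA : Admissible ν t m₁ m₂ := by
    simp only [ne_eq, Prod.mk.injEq] at hcase
    exact ⟨ht, by omega, by omega, by omega, by omega⟩
  refine h.eq_C3_C4_or_of_extremalProduct_le hf hA hm hnt ?_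
  obtain ⟨S, hS⟩ := polar_nonempty hf (by omega : t + 1 ≤ ν)
  rw [← ncard_C3_mul_ncard_C4 hf hS (by omega) hmt]
  exact_mod_cast hmax _ _ crossIntersecting_C3_C4
    (not_isTrivialPair_C3_C4 hf hS ht hmt (by omega))

theorem stmt_4
    (q ν m₁ m₂ t : ℕ) (hq : IsPrimePow q)
    {K : Type} [Field K] [Fintype K] (hK : Fintype.card K = q)
    (f : (Fin (2 * ν) → K) →ₗ[K] (Fin (2 * ν) → K) →ₗ[K] K)
    (halt : ∀ x, f x x = 0)
    (hnd : ∀ x, (∀ y, f x y = 0) → x = 0)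
    (hν : 0 < ν) (ht : 0 < t)
    (hm : m₂ ≤ m₁) (hmt : t + 1 ≤ m₂) (hdim : 2 * m₁ + m₂ + t + 3 ≤ 2 * ν)
    (hcase : m₂ ≤ 2 * t ∧ (m₁, m₂, t) ≠ (2, 2, 1) ∧ (m₁, m₂, t) ≠ (3, 2, 1))
    (ℱ₁ ℱ₂ : Set (Submodule K (Fin (2 * ν) → K)))
    (h1 : ℱ₁ ⊆ polar f m₁) (h2 : ℱ₂ ⊆ polar f m₂)
    (hcross : ∀ F₁ ∈ ℱ₁, ∀ F₂ ∈ ℱ₂, t ≤ finrank K ↥(F₁ ⊓ F₂))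
    (hnt : ¬ ∃ T ∈ polar f t, (∀ F ∈ ℱ₁, T ≤ F) ∧ (∀ F ∈ ℱ₂, T ≤ F))
    (hmax : ∀ 𝒢₁ 𝒢₂ : Set (Submodule K (Fin (2 * ν) → K)),
      𝒢₁ ⊆ polar f m₁ → 𝒢₂ ⊆ polar f m₂ →
      (∀ G₁ ∈ 𝒢₁, ∀ G₂ ∈ 𝒢₂, t ≤ finrank K ↥(G₁ ⊓ G₂)) →
      (¬ ∃ T ∈ polar f t, (∀ F ∈ 𝒢₁, T ≤ F) ∧ (∀ F ∈ 𝒢₂, T ≤ F)) →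
      𝒢₁.ncard * 𝒢₂.ncard ≤ ℱ₁.ncard * ℱ₂.ncard) :
    ∃ S ∈ polar f (t + 1),
      ((ℱ₁ = C3 f S m₁ ∧ ℱ₂ = C4 f S m₂ t) ∨
        (m₁ = m₂ ∧ ℱ₁ = C4 f S m₁ t ∧ ℱ₂ = C3 f S m₂)) :=
  stmt_4_general ⟨halt, hnd, by simp⟩ ht hm hmt hdim hcase ⟨h1, h2, hcross⟩ hnt
    fun 𝒢₁ 𝒢₂ h ↦ hmax 𝒢₁ 𝒢₂ h.1 h.2 h.3

end
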